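/- arXiv:1109.4353 — 3 statements merged into one kernel-verified Lean document; each statement's English description precedes it below -/
import Mathlib

section
/- Let R be a semi-closed, left-linear, right-algebraic conditional rewrite system respecting an arity a : Σ → ℕ, and let S be a conditionally (R,a)-stable set of terms. For every i ∈ ℕ and all t,u,v ∈ S, if t →_{R_i} u and u ▷β v, then there exist t', v' such that t ▷β t', t' →*_{R_i} v', and v ▷β v'. -/
/-!
The proof is Takahashi's: write `t*` for the complete development of `t` (all β-redexes of
`t` contracted at once, `Tm.dev`), so that `u ▷β v` implies `v ▷β u*` (`PB.dev_max`).
It then suffices to show that `t →_{R_i} u` implies `t* →*_{R_i} u*` (`condRel_dev`),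
and to take `t' = t*`, `v' = u*`.

* Rewriting at the root, `t = lσ → rσ = u`. As `l` and `r` are algebraic, no β-redex is created
  by substituting in them, so `(lσ)* = lσ*` and `(rσ)* = rσ*` where `σ*` is the pointwise
  development (`Neut.dev_subst`). It remains to see that the conditions still hold for `σ*`.
* Rewriting in context. The only difficulty is a step `t₁ t₂ → u₁ t₂` where `u₁` is an abstraction
  and `t₁` is not, so that `u₁ t₂` is a new β-redex. Then `t₁ = lσ` with `l = f l₁ … lₖ` and
  `k = a f`, and `t₁ t₂` has a subterm `f` applied to `k + 1` arguments: `t` does not respect `a`.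

That the conditions `d = c` are preserved along `σ ▷β τ` (`joinable_of_pb`) is shown by induction
on the stratum, together with the commutation `s ◁β t →_{R_i} u` implies `s →*_{R_i} v ◁β u`
(`peak`), which uses left-linearity (`Neut.pb_inv`). If `dσ →* w *← cσ = c`, the commutation one
stratum below gives `dτ →* w'` with `w ▷β w'`; since `c` is applicative and right-hand sides are
algebraic, `w` is applicative, hence `w' = w`, and `cτ = c →* w`.
-/

set_option autoImplicit false

/-- λ-terms over a signature `Sig`, in de Bruijn representation
(terms are identified up to α-conversion). -/
inductive Tm (Sig : Type) : Type
  | var : ℕ → Tm Sig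
  | app : Tm Sig → Tm Sig → Tm Sig
  | lam : Tm Sig → Tm Sig
  | sym : Sig → Tm Sig

namespace Tm

variable {Sig : Type}

/-- Shift the free de Bruijn indices `≥ d` up by one. -/
def lift (d : ℕ) : Tm Sig → Tm Sig
  | var n => if n < d then var n else var (n + 1)
  | app t u => app (lift d t) (lift d u)
  | lam t => lam (lift (d + 1) t)
  | sym f => sym f

/-- Lift a parallel substitution under one binder. -/
def up (σ : ℕ → Tm Sig) : ℕ → Tm Sig
  | 0 => var 0
  | n + 1 => lift 0 (σ n)

/-- Capture-avoiding (parallel) substitution. -/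
def subst (σ : ℕ → Tm Sig) : Tm Sig → Tm Sig
  | var n => σ n
  | app t u => app (subst σ t) (subst σ u)
  | lam t => lam (subst (up σ) t)
  | sym f => sym f

def scons (u : Tm Sig) (σ : ℕ → Tm Sig) : ℕ → Tm Sig
  | 0 => u
  | n + 1 => σ n

/-- `subst1 u t` substitutes `u` for the de Bruijn variable `0` in `t`. -/
def subst1 (u t : Tm Sig) : Tm Sig := subst (scons u var) t

/-- `FVar t n` : de Bruijn index `n` occurs free in `t`. -/
def FVar : Tm Sig → ℕ → Prop
  | var m, n => m = n
  | app t u, n => FVar t n ∨ FVar u n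
  | lam t, n => FVar t (n + 1)
  | sym _, _ => False

/-- Closed terms. -/
def ClosedTm (t : Tm Sig) : Prop := ∀ n, ¬ FVar t n

def countVar : Tm Sig → ℕ → ℕ
  | var m, n => if m = n then 1 else 0
  | app t u, n => countVar t n + countVar u n
  | lam t, n => countVar t (n + 1)
  | sym _, _ => 0

/-- Linear terms: each variable occurs at most once. -/
def LinearTm (t : Tm Sig) : Prop := ∀ n, countVar t n ≤ 1

/-- `appList h [t1, …, tn] = h t1 … tn`. -/
def appList (h : Tm Sig) : List (Tm Sig) → Tm Sig
  | [] => h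
  | u :: us => appList (app h u) us

/-- Applicative terms: terms containing no abstraction. -/
inductive Applicative : Tm Sig → Prop
  | var (n : ℕ) : Applicative (var n)
  | sym (f : Sig) : Applicative (sym f)
  | app {t u : Tm Sig} : Applicative t → Applicative u → Applicative (app t u)

/-- Algebraic terms: `t ::= x | f t1 … tn`. -/
inductive Algebraic : Tm Sig → Prop
  | var (n : ℕ) : Algebraic (var n)
  | symApp (f : Sig) (ts : List (Tm Sig)) :
      (∀ t ∈ ts, Algebraic t) → Algebraic (appList (sym f) ts)

/-- `Subterm s t` : `s` is a subterm of `t`. -/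
inductive Subterm : Tm Sig → Tm Sig → Prop
  | refl (t : Tm Sig) : Subterm t t
  | appL {s t u : Tm Sig} : Subterm s t → Subterm s (app t u)
  | appR {s t u : Tm Sig} : Subterm s u → Subterm s (app t u)
  | lam {s t : Tm Sig} : Subterm s t → Subterm s (lam t)

/-- `lamN m t = λ…λ.t` with `m` abstractions. -/
def lamN : ℕ → Tm Sig → Tm Sig
  | 0, t => t
  | m + 1, t => lam (lamN m t)

end Tm

/-- β-reduction: the smallest rewrite relation (closed under abstraction, left and
right application and substitution) with `(λ.t) u →β t[0 := u]`. -/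
inductive Beta {Sig : Type} : Tm Sig → Tm Sig → Prop
  | beta (t u : Tm Sig) : Beta (Tm.app (Tm.lam t) u) (Tm.subst1 u t)
  | abs {t u : Tm Sig} : Beta t u → Beta (Tm.lam t) (Tm.lam u)
  | appL {t u v : Tm Sig} : Beta t u → Beta (Tm.app t v) (Tm.app u v)
  | appR {t u v : Tm Sig} : Beta t u → Beta (Tm.app v t) (Tm.app v u)
  | substC (σ : ℕ → Tm Sig) {t u : Tm Sig} : Beta t u → Beta (Tm.subst σ t) (Tm.subst σ u)

/-- Tait–Martin-Löf parallel β-reduction: the smallest parallel rewrite relation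
with `(λ.t₁) t₂ ▷β u₁[0 := u₂]` whenever `t₁ ▷β u₁` and `t₂ ▷β u₂`. -/
inductive PBeta {Sig : Type} : Tm Sig → Tm Sig → Prop
  | var (n : ℕ) : PBeta (Tm.var n) (Tm.var n)
  | sym (f : Sig) : PBeta (Tm.sym f) (Tm.sym f)
  | app {t₁ u₁ t₂ u₂ : Tm Sig} : PBeta t₁ u₁ → PBeta t₂ u₂ →
      PBeta (Tm.app t₁ t₂) (Tm.app u₁ u₂)
  | abs {t u : Tm Sig} : PBeta t u → PBeta (Tm.lam t) (Tm.lam u)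
  | substC (σ : ℕ → Tm Sig) {t u : Tm Sig} : PBeta t u → PBeta (Tm.subst σ t) (Tm.subst σ u)
  | beta {t₁ u₁ t₂ u₂ : Tm Sig} : PBeta t₁ u₁ → PBeta t₂ u₂ →
      PBeta (Tm.app (Tm.lam t₁) t₂) (Tm.subst1 u₂ u₁)

/-- β-normal forms. -/
def BetaNormal {Sig : Type} (t : Tm Sig) : Prop := ∀ u, ¬ Beta t u

/-- `IsBnf t n` : `n` is a β-normal form of `t`. -/
def IsBnf {Sig : Type} (t n : Tm Sig) : Prop :=
  Relation.ReflTransGen Beta t n ∧ BetaNormal n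

/-- Weakly β-normalizing terms. -/
def WNbeta {Sig : Type} (t : Tm Sig) : Prop := ∃ n, IsBnf t n

/-- Conditional rewrite rule `d1 = c1 ∧ … ∧ dn = cn ⊃ l ↦ r`:  every variable of
the `di`, `ci` and `r` occurs in `l`, and `l` is a non-variable algebraic term. -/
structure CondRule (Sig : Type) where
  conds : List (Tm Sig × Tm Sig)
  lhs : Tm Sig
  rhs : Tm Sig
  lhs_alg : Tm.Algebraic lhs
  lhs_not_var : ∀ n, lhs ≠ Tm.var n
  fv_conds : ∀ p ∈ conds,
    (∀ n, Tm.FVar p.1 n → Tm.FVar lhs n) ∧ (∀ n, Tm.FVar p.2 n → Tm.FVar lhs n)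
  fv_rhs : ∀ n, Tm.FVar rhs n → Tm.FVar lhs n

/-- Joinability: a common reduct. -/
def Joinable {α : Type} (R : α → α → Prop) (t u : α) : Prop :=
  ∃ v, Relation.ReflTransGen R t v ∧ Relation.ReflTransGen R u v

/-- One stratum of conditional rewriting: the smallest rewrite relation such that
`lσ → rσ` for every rule whose conditions are joinable w.r.t. `prev`. -/
inductive CondStep {Sig : Type} (Rules : Set (CondRule Sig))
    (prev : Tm Sig → Tm Sig → Prop) : Tm Sig → Tm Sig → Prop
  | rule {ρ : CondRule Sig} (hρ : ρ ∈ Rules) (σ : ℕ → Tm Sig)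
      (hconds : ∀ p ∈ ρ.conds, Joinable prev (Tm.subst σ p.1) (Tm.subst σ p.2)) :
      CondStep Rules prev (Tm.subst σ ρ.lhs) (Tm.subst σ ρ.rhs)
  | abs {t u : Tm Sig} : CondStep Rules prev t u →
      CondStep Rules prev (Tm.lam t) (Tm.lam u)
  | appL {t u v : Tm Sig} : CondStep Rules prev t u →
      CondStep Rules prev (Tm.app t v) (Tm.app u v)
  | appR {t u v : Tm Sig} : CondStep Rules prev t u →
      CondStep Rules prev (Tm.app v t) (Tm.app v u)
  | substC (σ : ℕ → Tm Sig) {t u : Tm Sig} : CondStep Rules prev t u →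
      CondStep Rules prev (Tm.subst σ t) (Tm.subst σ u)

/-- Stratified conditional rewriting `→_{R_i}`. -/
def CondRel {Sig : Type} (Rules : Set (CondRule Sig)) : ℕ → Tm Sig → Tm Sig → Prop
  | 0 => fun _ _ => False
  | i + 1 => CondStep Rules (CondRel Rules i)

/-- Conditional rewriting `→_R = ⋃ i, →_{R_i}`. -/
def CondRew {Sig : Type} (Rules : Set (CondRule Sig)) (t u : Tm Sig) : Prop :=
  ∃ i, CondRel Rules i t u

/-- Stratified β-conditional rewriting `→_{R(β)_i}`: conditions are evaluated
w.r.t. `→_{β ∪ R(β)_{i-1}}`. -/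
def BCondRel {Sig : Type} (Rules : Set (CondRule Sig)) : ℕ → Tm Sig → Tm Sig → Prop
  | 0 => fun _ _ => False
  | i + 1 => CondStep Rules (fun a b => Beta a b ∨ BCondRel Rules i a b)

/-- β-conditional rewriting `→_{R(β)} = ⋃ i, →_{R(β)_i}`. -/
def BCondRew {Sig : Type} (Rules : Set (CondRule Sig)) (t u : Tm Sig) : Prop :=
  ∃ i, BCondRel Rules i t u

def IsConfluent {α : Type} (R : α → α → Prop) : Prop :=
  ∀ t u v, Relation.ReflTransGen R t u → Relation.ReflTransGen R t v →
    ∃ w, Relation.ReflTransGen R u w ∧ Relation.ReflTransGen R v w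

def ConfluentOn {α : Type} (S : Set α) (R : α → α → Prop) : Prop :=
  ∀ t ∈ S, ∀ u v, Relation.ReflTransGen R t u → Relation.ReflTransGen R t v →
    ∃ w, Relation.ReflTransGen R u w ∧ Relation.ReflTransGen R v w

def Commutes {α : Type} (R₁ R₂ : α → α → Prop) : Prop :=
  ∀ s u t, Relation.ReflTransGen R₁ s u → Relation.ReflTransGen R₂ s t →
    ∃ v, Relation.ReflTransGen R₂ u v ∧ Relation.ReflTransGen R₁ t v

def LeftLinear {Sig : Type} (Rules : Set (CondRule Sig)) : Prop :=
  ∀ ρ ∈ Rules, Tm.LinearTm ρ.lhs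

/-- Semi-closed systems: in every rule the `ci` are closed applicative terms. -/
def SemiClosed {Sig : Type} (Rules : Set (CondRule Sig)) : Prop :=
  ∀ ρ ∈ Rules, ∀ p ∈ ρ.conds, Tm.Applicative p.2 ∧ Tm.ClosedTm p.2

def RightApplicative {Sig : Type} (Rules : Set (CondRule Sig)) : Prop :=
  ∀ ρ ∈ Rules, Tm.Applicative ρ.rhs

def RightAlgebraic {Sig : Type} (Rules : Set (CondRule Sig)) : Prop :=
  ∀ ρ ∈ Rules, Tm.Algebraic ρ.rhs

/-- Algebraic systems: in every rule the `di`, `ci` and `r` are algebraic. -/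
def AlgebraicSys {Sig : Type} (Rules : Set (CondRule Sig)) : Prop :=
  ∀ ρ ∈ Rules, (∀ p ∈ ρ.conds, Tm.Algebraic p.1 ∧ Tm.Algebraic p.2) ∧ Tm.Algebraic ρ.rhs

/-- A term respects the arity `a` if it contains no subterm `f t1 … tn` with `n > a f`. -/
def RespectsArity {Sig : Type} (a : Sig → ℕ) (t : Tm Sig) : Prop :=
  ∀ (f : Sig) (ts : List (Tm Sig)),
    Tm.Subterm (Tm.appList (Tm.sym f) ts) t → ts.length ≤ a f

/-- A conditional rule respects `a` if the `di`, `ci` and both sides of `l ↦ r`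
respect `a`, and `l = f l1 … lk` with `k = a f`. -/
def RuleRespectsArity {Sig : Type} (a : Sig → ℕ) (ρ : CondRule Sig) : Prop :=
  (∀ p ∈ ρ.conds, RespectsArity a p.1 ∧ RespectsArity a p.2) ∧
  RespectsArity a ρ.lhs ∧ RespectsArity a ρ.rhs ∧
  ∃ (f : Sig) (ls : List (Tm Sig)), ρ.lhs = Tm.appList (Tm.sym f) ls ∧ ls.length = a f

def SysRespectsArity {Sig : Type} (a : Sig → ℕ) (Rules : Set (CondRule Sig)) : Prop :=
  ∀ ρ ∈ Rules, RuleRespectsArity a ρ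

/-- `AN_a` : terms having a β-normal form, whose β-normal form respects `a`. -/
def ANset {Sig : Type} (a : Sig → ℕ) : Set (Tm Sig) :=
  {t | ∃ n, IsBnf t n ∧ RespectsArity a n}

/-- The rewrite relation of the unconditional system `R̄` containing `l ↦ di` and
`l ↦ r` for each rule `d⃗ = c⃗ ⊃ l ↦ r` of `R`. -/
inductive BarRel {Sig : Type} (Rules : Set (CondRule Sig)) : Tm Sig → Tm Sig → Prop
  | ruleCond {ρ : CondRule Sig} (hρ : ρ ∈ Rules) {p : Tm Sig × Tm Sig} (hp : p ∈ ρ.conds)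
      (σ : ℕ → Tm Sig) : BarRel Rules (Tm.subst σ ρ.lhs) (Tm.subst σ p.1)
  | ruleRhs {ρ : CondRule Sig} (hρ : ρ ∈ Rules) (σ : ℕ → Tm Sig) :
      BarRel Rules (Tm.subst σ ρ.lhs) (Tm.subst σ ρ.rhs)
  | abs {t u : Tm Sig} : BarRel Rules t u → BarRel Rules (Tm.lam t) (Tm.lam u)
  | appL {t u v : Tm Sig} : BarRel Rules t u → BarRel Rules (Tm.app t v) (Tm.app u v)
  | appR {t u v : Tm Sig} : BarRel Rules t u → BarRel Rules (Tm.app v t) (Tm.app v u)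
  | substC (σ : ℕ → Tm Sig) {t u : Tm Sig} : BarRel Rules t u →
      BarRel Rules (Tm.subst σ t) (Tm.subst σ u)

/-- Conditionally `(R, a)`-stable sets of terms. -/
def CondStable {Sig : Type} (Rules : Set (CondRule Sig)) (a : Sig → ℕ)
    (S : Set (Tm Sig)) : Prop :=
  (∀ t ∈ S, RespectsArity a t) ∧
  (∀ t ∈ S, ∀ u, (Beta t u ∨ BarRel Rules t u) → u ∈ S) ∧
  (∀ t ∈ S, ∀ u, Tm.Subterm u t → u ∈ S)

/-- Head β-step along an application spine. -/
inductive HeadAux {Sig : Type} : Tm Sig → Tm Sig → Prop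
  | beta (b a₀ : Tm Sig) : HeadAux (Tm.app (Tm.lam b) a₀) (Tm.subst1 a₀ b)
  | app {t u : Tm Sig} (v : Tm Sig) : HeadAux t u → HeadAux (Tm.app t v) (Tm.app u v)

/-- Head β-reduction `→h` : `λx⃗.(λy.b) a₀ a₁ … aₙ →h λx⃗.b[y:=a₀] a₁ … aₙ`. -/
inductive HeadRed {Sig : Type} : Tm Sig → Tm Sig → Prop
  | base {t u : Tm Sig} : HeadAux t u → HeadRed t u
  | lam {t u : Tm Sig} : HeadRed t u → HeadRed (Tm.lam t) (Tm.lam u)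

/-- The relation `≻` : (a) `λx⃗.v a1 … an ≻ ai` for `v` a variable or a symbol and
`n > 0`; (b) `λx⃗.(λy.b) a0 a1 … an ≻ λx⃗.b[y:=a0] a1 … an` (a head β-step). -/
def SuccRel {Sig : Type} (t u : Tm Sig) : Prop :=
  (∃ (m : ℕ) (h : Tm Sig) (args : List (Tm Sig)),
    ((∃ n, h = Tm.var n) ∨ (∃ f, h = Tm.sym f)) ∧ args ≠ [] ∧
    t = Tm.lamN m (Tm.appList h args) ∧ u ∈ args)
  ∨ HeadRed t u

/-- The nested parallelization `▷_{R_i}` of `→_{R_i}`: the smallest parallel rewrite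
relation with `lσ ▷ rτ` whenever `lσ →_{R_i} rσ` and `σ ▷ τ`. -/
inductive NPar {Sig : Type} (Rules : Set (CondRule Sig)) (i : ℕ) : Tm Sig → Tm Sig → Prop
  | var (n : ℕ) : NPar Rules i (Tm.var n) (Tm.var n)
  | sym (f : Sig) : NPar Rules i (Tm.sym f) (Tm.sym f)
  | app {t₁ u₁ t₂ u₂ : Tm Sig} : NPar Rules i t₁ u₁ → NPar Rules i t₂ u₂ →
      NPar Rules i (Tm.app t₁ t₂) (Tm.app u₁ u₂)
  | abs {t u : Tm Sig} : NPar Rules i t u → NPar Rules i (Tm.lam t) (Tm.lam u)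
  | substC (σ : ℕ → Tm Sig) {t u : Tm Sig} : NPar Rules i t u →
      NPar Rules i (Tm.subst σ t) (Tm.subst σ u)
  | rule {ρ : CondRule Sig} (hρ : ρ ∈ Rules) (σ τ : ℕ → Tm Sig)
      (hstep : CondRel Rules i (Tm.subst σ ρ.lhs) (Tm.subst σ ρ.rhs))
      (hστ : ∀ n, NPar Rules i (σ n) (τ n)) :
      NPar Rules i (Tm.subst σ ρ.lhs) (Tm.subst τ ρ.rhs)

/-- The smallest parallel rewrite relation containing `R`. -/
inductive ParCl {Sig : Type} (R : Tm Sig → Tm Sig → Prop) : Tm Sig → Tm Sig → Prop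
  | base {t u : Tm Sig} : R t u → ParCl R t u
  | var (n : ℕ) : ParCl R (Tm.var n) (Tm.var n)
  | sym (f : Sig) : ParCl R (Tm.sym f) (Tm.sym f)
  | app {t₁ u₁ t₂ u₂ : Tm Sig} : ParCl R t₁ u₁ → ParCl R t₂ u₂ →
      ParCl R (Tm.app t₁ t₂) (Tm.app u₁ u₂)
  | abs {t u : Tm Sig} : ParCl R t u → ParCl R (Tm.lam t) (Tm.lam u)
  | substC (σ : ℕ → Tm Sig) {t u : Tm Sig} : ParCl R t u →
      ParCl R (Tm.subst σ t) (Tm.subst σ u)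

/-- A rooted β-conditional rewrite step `lσ →_{R(β)_i} rσ` for the rule `ρ` and the
substitution `σ`: `ρ ∈ R` and the conditions of `ρ` instantiated by `σ` are joinable
w.r.t. `→_{β ∪ R(β)_{i-1}}`. -/
def RootedBStep {Sig : Type} (Rules : Set (CondRule Sig)) :
    ℕ → CondRule Sig → (ℕ → Tm Sig) → Prop
  | 0 => fun _ _ => False
  | i + 1 => fun ρ σ => ρ ∈ Rules ∧
      ∀ p ∈ ρ.conds,
        Joinable (fun a b => Beta a b ∨ BCondRel Rules i a b)
          (Tm.subst σ p.1) (Tm.subst σ p.2)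

/-- Subterm at a position (positions only descend through applications, which is
enough for algebraic left-hand sides). -/
def subtermAt {Sig : Type} : Tm Sig → List Bool → Option (Tm Sig)
  | t, [] => some t
  | Tm.app a _, false :: p => subtermAt a p
  | Tm.app _ b, true :: p => subtermAt b p
  | _, _ :: _ => none

/-- Replacement at a position. -/
def replaceAt {Sig : Type} : Tm Sig → List Bool → Tm Sig → Option (Tm Sig)
  | _, [], s => some s
  | Tm.app a b, false :: p, s => (replaceAt a p s).map (fun a' => Tm.app a' b)
  | Tm.app a b, true :: p, s => (replaceAt b p s).map (fun b' => Tm.app a b')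
  | _, _ :: _, _ => none

/-- Conditional critical pairs: an overlap of `ρ₂` at a non-variable position `p` of
the left-hand side of `ρ₁` via a most general unifier (here presented with a pair of
substitutions, which accounts for variable-disjoint renamings). -/
def CriticalPair {Sig : Type} (Rules : Set (CondRule Sig))
    (conds : List (Tm Sig × Tm Sig)) (s t : Tm Sig) : Prop :=
  ∃ ρ₁ ∈ Rules, ∃ ρ₂ ∈ Rules, ∃ (p : List Bool) (w : Tm Sig) (σ₁ σ₂ : ℕ → Tm Sig),
    subtermAt ρ₁.lhs p = some w ∧
    (∀ n, w ≠ Tm.var n) ∧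
    ¬ (ρ₁ = ρ₂ ∧ p = []) ∧
    Tm.subst σ₁ w = Tm.subst σ₂ ρ₂.lhs ∧
    (∀ τ₁ τ₂ : ℕ → Tm Sig, Tm.subst τ₁ w = Tm.subst τ₂ ρ₂.lhs →
      ∃ δ : ℕ → Tm Sig, (∀ n, Tm.FVar ρ₁.lhs n → τ₁ n = Tm.subst δ (σ₁ n)) ∧
        (∀ n, Tm.FVar ρ₂.lhs n → τ₂ n = Tm.subst δ (σ₂ n))) ∧
    conds = ρ₁.conds.map (fun q => (Tm.subst σ₁ q.1, Tm.subst σ₁ q.2)) ++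
            ρ₂.conds.map (fun q => (Tm.subst σ₂ q.1, Tm.subst σ₂ q.2)) ∧
    replaceAt (Tm.subst σ₁ ρ₁.lhs) p (Tm.subst σ₂ ρ₂.rhs) = some s ∧
    t = Tm.subst σ₁ ρ₁.rhs

/-- A symbol is defined if it heads the left-hand side of some rule. -/
def DefinedSym {Sig : Type} (Rules : Set (CondRule Sig)) (f : Sig) : Prop :=
  ∃ ρ ∈ Rules, ∃ ts : List (Tm Sig), ρ.lhs = Tm.appList (Tm.sym f) ts

/-- OrthonormalSys systems. -/
def OrthonormalSys {Sig : Type} (Rules : Set (CondRule Sig)) : Prop :=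
  LeftLinear Rules ∧
  (∀ ρ ∈ Rules, ∀ p ∈ ρ.conds, Tm.ClosedTm p.2 ∧ BetaNormal p.2 ∧
    ∀ f, DefinedSym Rules f → ¬ Tm.Subterm (Tm.sym f) p.2) ∧
  (∀ (conds : List (Tm Sig × Tm Sig)) (s t : Tm Sig), CriticalPair Rules conds s t →
    ∃ i j : Fin conds.length, i ≠ j ∧
      (conds.get i).1 = (conds.get j).1 ∧ (conds.get i).2 ≠ (conds.get j).2)

/-- Dershowitz–Manna multiset extension of `<` on `ℕ`. -/
def MulLt (s t : Multiset ℕ) : Prop :=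
  ∃ X Y Z : Multiset ℕ, Y ≠ 0 ∧ s = Z + X ∧ t = Z + Y ∧ ∀ x ∈ X, ∃ y ∈ Y, x < y

/-! ### Renamings and the substitution calculus -/

namespace Tm

variable {Sig : Type}

/-- A renaming extended under one binder. -/
def upr (ξ : ℕ → ℕ) : ℕ → ℕ
  | 0 => 0
  | n + 1 => ξ n + 1

/-- Renaming of the free de Bruijn indices; `lift d` is the case of a shift (`lift_eq_ren`). -/
def ren (ξ : ℕ → ℕ) : Tm Sig → Tm Sig
  | var n => var (ξ n)
  | app t u => app (ren ξ t) (ren ξ u)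
  | lam t => lam (ren (upr ξ) t)
  | sym f => sym f

theorem lift_eq_ren (t : Tm Sig) : ∀ d : ℕ,
    lift d t = ren (fun n => if n < d then n else n + 1) t := by
  induction t with
  | var n => intro d; simp only [lift, ren]; split <;> rfl
  | app t u iht ihu => intro d; simp only [lift, ren, iht, ihu]
  | sym f => intro d; rfl
  | lam t ih =>
    intro d
    simp only [lift, ren, ih]
    congr 2
    funext n
    cases n with
    | zero => simp [upr]
    | succ n => simp only [upr]; split <;> split <;> omega

theorem lift_zero (t : Tm Sig) : lift 0 t = ren Nat.succ t := by
  rw [lift_eq_ren]; rfl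

theorem up_var (ξ : ℕ → ℕ) : up (fun n => var (Sig := Sig) (ξ n)) = fun n => var (upr ξ n) := by
  funext n
  cases n <;> simp [up, upr, lift]

theorem ren_eq_subst (t : Tm Sig) : ∀ ξ : ℕ → ℕ, ren ξ t = subst (fun n => var (ξ n)) t := by
  induction t with
  | var n => intro ξ; rfl
  | app t u iht ihu => intro ξ; simp only [ren, subst, iht, ihu]
  | sym f => intro ξ; rfl
  | lam t ih => intro ξ; simp only [ren, subst, ih, up_var]

theorem subst_ren (t : Tm Sig) : ∀ (σ : ℕ → Tm Sig) (ξ : ℕ → ℕ),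
    subst σ (ren ξ t) = subst (fun n => σ (ξ n)) t := by
  induction t with
  | var n => intro σ ξ; rfl
  | app t u iht ihu => intro σ ξ; simp only [ren, subst, iht, ihu]
  | sym f => intro σ ξ; rfl
  | lam t ih =>
    intro σ ξ
    simp only [ren, subst, ih]
    congr 2
    funext n
    cases n <;> rfl

theorem ren_ren (t : Tm Sig) (ξ ζ : ℕ → ℕ) : ren ζ (ren ξ t) = ren (fun n => ζ (ξ n)) t := by
  rw [ren_eq_subst _ ζ, subst_ren, ren_eq_subst]

theorem ren_subst (t : Tm Sig) : ∀ (σ : ℕ → Tm Sig) (ξ : ℕ → ℕ),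
    ren ξ (subst σ t) = subst (fun n => ren ξ (σ n)) t := by
  induction t with
  | var n => intro σ ξ; rfl
  | app t u iht ihu => intro σ ξ; simp only [ren, subst, iht, ihu]
  | sym f => intro σ ξ; rfl
  | lam t ih =>
    intro σ ξ
    simp only [ren, subst, ih]
    congr 2
    funext n
    cases n with
    | zero => rfl
    | succ n => simp only [up, lift_zero, ren_ren, upr]

theorem subst_subst (t : Tm Sig) : ∀ σ τ : ℕ → Tm Sig,
    subst τ (subst σ t) = subst (fun n => subst τ (σ n)) t := by
  induction t with
  | var n => intro σ τ; rfl
  | app t u iht ihu => intro σ τ; simp only [subst, iht, ihu]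
  | sym f => intro σ τ; rfl
  | lam t ih =>
    intro σ τ
    simp only [subst, ih]
    congr 2
    funext n
    cases n with
    | zero => rfl
    | succ n => simp only [up, lift_zero, subst_ren, ren_subst]

theorem subst_var (t : Tm Sig) : subst var t = t := by
  induction t with
  | var n => rfl
  | app t u iht ihu => simp only [subst, iht, ihu]
  | sym f => rfl
  | lam t ih =>
    have h : up (var (Sig := Sig)) = var := by
      funext n; cases n <;> simp [up, lift]
    simp only [subst, h, ih]

theorem subst1_subst_up (u t : Tm Sig) (σ : ℕ → Tm Sig) :
    subst1 u (subst (up σ) t) = subst (scons u σ) t := by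
  unfold subst1
  rw [subst_subst]
  congr 1
  funext n
  cases n with
  | zero => rfl
  | succ n =>
    simp only [up, lift_zero, subst_ren, scons]
    exact subst_var _

theorem subst_subst1 (u t : Tm Sig) (σ : ℕ → Tm Sig) :
    subst σ (subst1 u t) = subst1 (subst σ u) (subst (up σ) t) := by
  rw [subst1_subst_up]
  unfold subst1
  rw [subst_subst]
  congr 1
  funext n
  cases n <;> rfl

theorem subst_congr (t : Tm Sig) : ∀ σ τ : ℕ → Tm Sig, (∀ n, FVar t n → σ n = τ n) →
    subst σ t = subst τ t := by
  induction t with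
  | var n => intro σ τ h; exact h n rfl
  | app t u iht ihu =>
    intro σ τ h
    simp only [subst]
    rw [iht σ τ fun n hn => h n (Or.inl hn), ihu σ τ fun n hn => h n (Or.inr hn)]
  | sym f => intro σ τ h; rfl
  | lam t ih =>
    intro σ τ h
    simp only [subst]
    rw [ih (up σ) (up τ)]
    intro n hn
    cases n with
    | zero => rfl
    | succ n => simp only [up, h n hn]

theorem subst_closed {t : Tm Sig} (ht : ClosedTm t) (σ τ : ℕ → Tm Sig) :
    subst σ t = subst τ t :=
  subst_congr t σ τ fun n hn => (ht n hn).elim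

theorem countVar_pos {t : Tm Sig} : ∀ {n : ℕ}, FVar t n → 0 < countVar t n := by
  induction t with
  | var m => intro n h; simp only [FVar] at h; simp [countVar, h]
  | app t u iht ihu =>
    intro n h
    simp only [countVar]
    rcases h with h | h
    · have := iht h; omega
    · have := ihu h; omega
  | sym f => intro n h; exact h.elim
  | lam t ih => intro n h; exact ih h

theorem appList_concat (h u : Tm Sig) (ts : List (Tm Sig)) :
    appList h (ts ++ [u]) = app (appList h ts) u := by
  induction ts generalizing h with
  | nil => rfl
  | cons t ts ih => exact ih (app h t)

theorem subst_appList (σ : ℕ → Tm Sig) (h : Tm Sig) (ts : List (Tm Sig)) :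
    subst σ (appList h ts) = appList (subst σ h) (ts.map (subst σ)) := by
  induction ts generalizing h with
  | nil => rfl
  | cons t ts ih => exact ih (app h t)

/-- The complete development of a term: all its β-redexes are contracted simultaneously. -/
def dev : Tm Sig → Tm Sig
  | var n => var n
  | sym f => sym f
  | lam t => lam (dev t)
  | app (lam t) u => subst1 (dev u) (dev t)
  | app (var n) u => app (var n) (dev u)
  | app (sym f) u => app (sym f) (dev u)
  | app (app t s) u => app (dev (app t s)) (dev u)

theorem dev_app_of_ne_lam {t : Tm Sig} (ht : ∀ p, t ≠ lam p) (u : Tm Sig) :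
    dev (app t u) = app (dev t) (dev u) := by
  cases t with
  | lam p => exact (ht p rfl).elim
  | _ => simp [dev]

end Tm

/-! ### Parallel β-reduction and complete developments -/

/-- Parallel β-reduction presented without the rule of closure under substitution, which is
admissible (`PB.substs`). It coincides with `PBeta`. -/
inductive PB {Sig : Type} : Tm Sig → Tm Sig → Prop
  | var (n : ℕ) : PB (Tm.var n) (Tm.var n)
  | sym (f : Sig) : PB (Tm.sym f) (Tm.sym f)
  | app {t₁ u₁ t₂ u₂ : Tm Sig} : PB t₁ u₁ → PB t₂ u₂ → PB (Tm.app t₁ t₂) (Tm.app u₁ u₂)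
  | abs {t u : Tm Sig} : PB t u → PB (Tm.lam t) (Tm.lam u)
  | beta {t₁ u₁ t₂ u₂ : Tm Sig} : PB t₁ u₁ → PB t₂ u₂ →
      PB (Tm.app (Tm.lam t₁) t₂) (Tm.subst1 u₂ u₁)

section

variable {Sig : Type}

open Tm Relation

theorem PB.refl (t : Tm Sig) : PB t t := by
  induction t with
  | var n => exact .var n
  | app t u iht ihu => exact .app iht ihu
  | sym f => exact .sym f
  | lam t ih => exact .abs ih

theorem PB.subst {t u : Tm Sig} (h : PB t u) : ∀ σ : ℕ → Tm Sig, PB (t.subst σ) (u.subst σ) := by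
  induction h with
  | var n => intro σ; exact PB.refl _
  | sym f => intro σ; exact PB.refl _
  | app _ _ ih₁ ih₂ => intro σ; exact .app (ih₁ σ) (ih₂ σ)
  | abs _ ih => intro σ; exact .abs (ih _)
  | beta _ _ ih₁ ih₂ => intro σ; rw [subst_subst1]; exact .beta (ih₁ _) (ih₂ σ)

theorem PB.up {σ τ : ℕ → Tm Sig} (h : ∀ n, PB (σ n) (τ n)) (n : ℕ) : PB (up σ n) (up τ n) := by
  cases n with
  | zero => exact .var 0
  | succ n =>
    simp only [Tm.up, lift_zero, ren_eq_subst]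
    exact (h n).subst _

theorem PB.substs {t u : Tm Sig} (h : PB t u) : ∀ {σ τ : ℕ → Tm Sig}, (∀ n, PB (σ n) (τ n)) →
    PB (t.subst σ) (u.subst τ) := by
  induction h with
  | var n => intro σ τ hst; exact hst n
  | sym f => intro σ τ hst; exact .sym f
  | app _ _ ih₁ ih₂ => intro σ τ hst; exact .app (ih₁ hst) (ih₂ hst)
  | abs _ ih => intro σ τ hst; exact .abs (ih (PB.up hst))
  | beta _ _ ih₁ ih₂ =>
    intro σ τ hst
    rw [subst_subst1]
    exact .beta (ih₁ (PB.up hst)) (ih₂ hst)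

theorem PB.subst1 {t u p q : Tm Sig} (h : PB t u) (hp : PB p q) :
    PB (Tm.subst1 p t) (Tm.subst1 q u) := by
  refine PB.substs h fun n => ?_
  cases n with
  | zero => exact hp
  | succ n => exact .var n

theorem PB.toPBeta {t u : Tm Sig} (h : PB t u) : PBeta t u := by
  induction h with
  | var n => exact .var n
  | sym f => exact .sym f
  | app _ _ ih₁ ih₂ => exact .app ih₁ ih₂
  | abs _ ih => exact .abs ih
  | beta _ _ ih₁ ih₂ => exact .beta ih₁ ih₂

theorem PBeta.toPB {t u : Tm Sig} (h : PBeta t u) : PB t u := by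
  induction h with
  | var n => exact .var n
  | sym f => exact .sym f
  | app _ _ ih₁ ih₂ => exact .app ih₁ ih₂
  | abs _ ih => exact .abs ih
  | substC σ _ ih => exact ih.subst σ
  | beta _ _ ih₁ ih₂ => exact .beta ih₁ ih₂

theorem PB.lam_inv {t s : Tm Sig} (h : PB (Tm.lam t) s) : ∃ t', s = Tm.lam t' ∧ PB t t' := by
  cases h with
  | abs h => exact ⟨_, rfl, h⟩

/-- Takahashi's triangle property. -/
theorem PB.dev_max {t u : Tm Sig} (h : PB t u) : PB u (dev t) := by
  induction h with
  | var n => exact .var n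
  | sym f => exact .sym f
  | abs _ ih => exact .abs ih
  | beta _ _ ih₁ ih₂ => exact PB.subst1 ih₁ ih₂
  | @app t₁ u₁ t₂ u₂ h₁ h₂ ih₁ ih₂ =>
    by_cases hl : ∃ p, t₁ = Tm.lam p
    · obtain ⟨p, rfl⟩ := hl
      obtain ⟨p', rfl, hp⟩ := h₁.lam_inv
      obtain ⟨q, hq, hpq⟩ := ih₁.lam_inv
      simp only [dev, Tm.lam.injEq] at hq
      subst hq
      exact .beta hpq ih₂
    · rw [dev_app_of_ne_lam (by simpa using hl)]
      exact .app ih₁ ih₂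

/-! ### Algebraic and applicative terms -/

/-- Non-variable algebraic terms, `t ::= f t₁ … tₙ` with each `tᵢ` a variable or again such a term,
generated one application at a time along the spine. -/
inductive Neut : Tm Sig → Prop
  | sym (f : Sig) : Neut (Tm.sym f)
  | appVar {h : Tm Sig} (n : ℕ) : Neut h → Neut (Tm.app h (Tm.var n))
  | appNeut {h u : Tm Sig} : Neut h → Neut u → Neut (Tm.app h u)

theorem algebraic_cases {t : Tm Sig} (h : Algebraic t) : (∃ n, t = Tm.var n) ∨ Neut t := by
  induction h with
  | var n => exact Or.inl ⟨n, rfl⟩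
  | symApp f ts _ ih =>
    right
    induction ts using List.reverseRecOn with
    | nil => exact .sym f
    | append_singleton ts u ihts =>
      rw [appList_concat]
      have h₁ : Neut (appList (Tm.sym f) ts) :=
        ihts (fun t ht => by simp_all) fun t ht => ih t (by simp [ht])
      rcases ih u (by simp) with ⟨n, rfl⟩ | hu
      · exact .appVar n h₁
      · exact .appNeut h₁ hu

theorem CondRule.neut (ρ : CondRule Sig) : Neut ρ.lhs :=
  (algebraic_cases ρ.lhs_alg).resolve_left fun ⟨n, hn⟩ => ρ.lhs_not_var n hn

theorem Neut.subst_ne_lam {t : Tm Sig} (h : Neut t) (σ : ℕ → Tm Sig) (p : Tm Sig) :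
    t.subst σ ≠ Tm.lam p := by
  cases h <;> simp [Tm.subst]

theorem Neut.applicative {t : Tm Sig} (h : Neut t) : Applicative t := by
  induction h with
  | sym f => exact .sym f
  | appVar n _ ih => exact .app ih (.var n)
  | appNeut _ _ ih₁ ih₂ => exact .app ih₁ ih₂

theorem algebraic_applicative {t : Tm Sig} (h : Algebraic t) : Applicative t := by
  rcases algebraic_cases h with ⟨n, rfl⟩ | h
  · exact .var n
  · exact h.applicative

theorem Neut.dev_subst {t : Tm Sig} (h : Neut t) (σ : ℕ → Tm Sig) :
    dev (t.subst σ) = t.subst fun n => dev (σ n) := by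
  induction h with
  | sym f => rfl
  | appVar n h ih =>
    simp only [Tm.subst] at ih ⊢
    rw [dev_app_of_ne_lam (h.subst_ne_lam σ), ih]
  | appNeut h _ ih₁ ih₂ =>
    simp only [Tm.subst]
    rw [dev_app_of_ne_lam (h.subst_ne_lam σ), ih₁, ih₂]

theorem algebraic_dev_subst {t : Tm Sig} (h : Algebraic t) (σ : ℕ → Tm Sig) :
    dev (t.subst σ) = t.subst fun n => dev (σ n) := by
  rcases algebraic_cases h with ⟨n, rfl⟩ | h
  · rfl
  · exact h.dev_subst σ

/-- Linearity allows reducts of instances of the two sides of an application to be obtained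
from one substitution. -/
theorem pb_inv_app {h u s₁ s₂ : Tm Sig} {σ τ₁ τ₂ : ℕ → Tm Sig} (hlin : LinearTm (Tm.app h u))
    (h₁ : ∀ n, PB (σ n) (τ₁ n)) (e₁ : s₁ = h.subst τ₁)
    (h₂ : ∀ n, PB (σ n) (τ₂ n)) (e₂ : s₂ = u.subst τ₂) :
    ∃ τ : ℕ → Tm Sig, (∀ n, PB (σ n) (τ n)) ∧ Tm.app s₁ s₂ = (Tm.app h u).subst τ := by
  classical
  refine ⟨fun n => if FVar u n then τ₂ n else τ₁ n, fun n => ?_, ?_⟩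
  · dsimp only
    split
    · exact h₂ n
    · exact h₁ n
  · simp only [Tm.subst, e₁, e₂]
    congr 1
    · refine subst_congr _ _ _ fun n hn => ?_
      have hu : ¬ FVar u n := fun hu => by
        have := hlin n
        have := countVar_pos hn
        have := countVar_pos hu
        simp only [countVar] at *
        omega
      simp [hu]
    · exact subst_congr _ _ _ fun n hn => by simp [hn]

/-- A parallel β-step from an instance of a linear non-variable algebraic term takes place inside
the substitution. -/
theorem Neut.pb_inv {l : Tm Sig} (h : Neut l) (σ : ℕ → Tm Sig) : LinearTm l →
    ∀ s, PB (l.subst σ) s → ∃ τ : ℕ → Tm Sig, (∀ n, PB (σ n) (τ n)) ∧ s = l.subst τ := by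
  induction h with
  | sym f =>
    intro _ s hs
    cases hs
    exact ⟨σ, fun n => PB.refl _, rfl⟩
  | @appVar h n hh ih =>
    intro hlin s hs
    have hlin₁ : LinearTm h := fun k => (Nat.le_add_right _ _).trans (hlin k)
    have hne := hh.subst_ne_lam σ
    simp only [Tm.subst] at hs
    generalize hw : h.subst σ = w at hs hne
    cases hs with
    | beta _ _ => exact (hne _ rfl).elim
    | @app _ s₁ _ s₂ p₁ p₂ =>
      subst hw
      obtain ⟨τ₁, ht₁, e₁⟩ := ih hlin₁ _ p₁
      refine pb_inv_app hlin ht₁ e₁ (τ₂ := fun k => if k = n then s₂ else σ k) (fun k => ?_) ?_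
      · split
        · next hk => subst hk; exact p₂
        · exact PB.refl _
      · simp [Tm.subst]
  | @appNeut h u hh hu ih₁ ih₂ =>
    intro hlin s hs
    have hlin₁ : LinearTm h := fun k => (Nat.le_add_right _ _).trans (hlin k)
    have hlin₂ : LinearTm u := fun k => (Nat.le_add_left _ _).trans (hlin k)
    have hne := hh.subst_ne_lam σ
    simp only [Tm.subst] at hs
    generalize hw : h.subst σ = w at hs hne
    cases hs with
    | beta _ _ => exact (hne _ rfl).elim
    | @app _ s₁ _ s₂ p₁ p₂ =>
      subst hw
      obtain ⟨τ₁, ht₁, e₁⟩ := ih₁ hlin₁ _ p₁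
      obtain ⟨τ₂, ht₂, e₂⟩ := ih₂ hlin₂ _ p₂
      exact pb_inv_app hlin ht₁ e₁ ht₂ e₂

theorem applicative_of_subst {t : Tm Sig} (ht : Applicative t) {σ : ℕ → Tm Sig}
    (h : Applicative (t.subst σ)) {n : ℕ} (hn : FVar t n) : Applicative (σ n) := by
  induction ht with
  | var m => cases hn; exact h
  | sym f => exact hn.elim
  | app _ _ ih₁ ih₂ =>
    cases h with
    | app h₁ h₂ => exact hn.elim (ih₁ h₁) (ih₂ h₂)

theorem applicative_subst {t : Tm Sig} (ht : Applicative t) {σ : ℕ → Tm Sig}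
    (h : ∀ n, FVar t n → Applicative (σ n)) : Applicative (t.subst σ) := by
  induction ht with
  | var m => exact h m rfl
  | sym f => exact .sym f
  | app _ _ ih₁ ih₂ =>
    exact .app (ih₁ fun n hn => h n (Or.inl hn)) (ih₂ fun n hn => h n (Or.inr hn))

theorem applicative_pb {t : Tm Sig} (ht : Applicative t) : ∀ {s}, PB t s → s = t := by
  induction ht with
  | var m => intro s h; cases h; rfl
  | sym f => intro s h; cases h; rfl
  | app h₁ _ ih₁ ih₂ =>
    intro s h
    cases h with
    | app p₁ p₂ => rw [ih₁ p₁, ih₂ p₂]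
    | beta _ _ => cases h₁

/-! ### Conditional rewriting -/

/-- One stratum of conditional rewriting, presented without the rule of closure under
substitution, which is admissible when `prev` is closed under substitution (`CS.subst`). -/
inductive CS (Rules : Set (CondRule Sig)) (prev : Tm Sig → Tm Sig → Prop) :
    Tm Sig → Tm Sig → Prop
  | rule {ρ : CondRule Sig} (hρ : ρ ∈ Rules) (σ : ℕ → Tm Sig)
      (hconds : ∀ p ∈ ρ.conds, Joinable prev (Tm.subst σ p.1) (Tm.subst σ p.2)) :
      CS Rules prev (Tm.subst σ ρ.lhs) (Tm.subst σ ρ.rhs)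
  | abs {t u : Tm Sig} : CS Rules prev t u → CS Rules prev (Tm.lam t) (Tm.lam u)
  | appL {t u v : Tm Sig} : CS Rules prev t u → CS Rules prev (Tm.app t v) (Tm.app u v)
  | appR {t u v : Tm Sig} : CS Rules prev t u → CS Rules prev (Tm.app v t) (Tm.app v u)

variable {Rules : Set (CondRule Sig)} {prev : Tm Sig → Tm Sig → Prop}

theorem CS.toCondStep {t u : Tm Sig} (h : CS Rules prev t u) : CondStep Rules prev t u := by
  induction h with
  | rule hρ σ hc => exact .rule hρ σ hc
  | abs _ ih => exact .abs ih
  | appL _ ih => exact .appL ih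
  | appR _ ih => exact .appR ih

theorem CS.subst (hprev : ∀ (σ : ℕ → Tm Sig) t u, prev t u → prev (t.subst σ) (u.subst σ))
    {t u : Tm Sig} (h : CS Rules prev t u) : ∀ σ : ℕ → Tm Sig,
    CS Rules prev (t.subst σ) (u.subst σ) := by
  induction h with
  | @rule ρ hρ σ hc =>
    intro τ
    rw [subst_subst, subst_subst]
    refine .rule hρ _ fun p hp => ?_
    obtain ⟨w, h₁, h₂⟩ := hc p hp
    rw [← subst_subst, ← subst_subst]
    exact ⟨w.subst τ, h₁.lift _ (hprev τ), h₂.lift _ (hprev τ)⟩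
  | abs _ ih => intro τ; exact .abs (ih _)
  | appL _ ih => intro τ; exact .appL (ih _)
  | appR _ ih => intro τ; exact .appR (ih _)

theorem CondRel.subst (i : ℕ) (σ : ℕ → Tm Sig) (t u : Tm Sig) (h : CondRel Rules i t u) :
    CondRel Rules i (t.subst σ) (u.subst σ) := by
  cases i with
  | zero => exact h
  | succ i => exact CondStep.substC σ h

theorem CondStep.toCS (hprev : ∀ (σ : ℕ → Tm Sig) t u, prev t u → prev (t.subst σ) (u.subst σ))
    {t u : Tm Sig} (h : CondStep Rules prev t u) : CS Rules prev t u := by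
  induction h with
  | rule hρ σ hc => exact .rule hρ σ hc
  | abs _ ih => exact .abs ih
  | appL _ ih => exact .appL ih
  | appR _ ih => exact .appR ih
  | substC σ _ ih => exact ih.subst hprev σ

/-- The only steps from an abstraction are inside its body, as no left-hand side instance is
an abstraction. -/
theorem CS.lam_inv {t u : Tm Sig} (h : CS Rules prev (Tm.lam t) u) :
    ∃ u', u = Tm.lam u' ∧ CS Rules prev t u' := by
  generalize hs : Tm.lam t = s at h
  cases h with
  | @rule ρ hρ σ hc => exact (ρ.neut.subst_ne_lam σ _ hs.symm).elim
  | abs h => cases hs; exact ⟨_, rfl, h⟩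
  | appL h => cases hs
  | appR h => cases hs

theorem CondRel.lam_inv {i : ℕ} {t u : Tm Sig} (h : CondRel Rules i (Tm.lam t) u) :
    ∃ u', u = Tm.lam u' ∧ CondRel Rules i t u' := by
  cases i with
  | zero => exact h.elim
  | succ i =>
    obtain ⟨u', e, hu⟩ := (CondStep.toCS (CondRel.subst i) h).lam_inv
    exact ⟨u', e, hu.toCondStep⟩

theorem rtg_lam_inv {i : ℕ} {t u : Tm Sig} (h : ReflTransGen (CondRel Rules i) (Tm.lam t) u) :
    ∃ u', u = Tm.lam u' ∧ ReflTransGen (CondRel Rules i) t u' := by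
  induction h with
  | refl => exact ⟨t, rfl, .refl⟩
  | tail _ hs ih =>
    obtain ⟨u', rfl, hu⟩ := ih
    obtain ⟨u'', rfl, hs'⟩ := hs.lam_inv
    exact ⟨u'', rfl, hu.tail hs'⟩

theorem rtg_subst {i : ℕ} {t u : Tm Sig} (h : ReflTransGen (CondRel Rules i) t u)
    (σ : ℕ → Tm Sig) : ReflTransGen (CondRel Rules i) (t.subst σ) (u.subst σ) :=
  h.lift _ (CondRel.subst i σ)

theorem rtg_lam {i : ℕ} {t u : Tm Sig} (h : ReflTransGen (CondRel Rules i) t u) :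
    ReflTransGen (CondRel Rules i) (Tm.lam t) (Tm.lam u) :=
  h.lift _ fun _ _ hs => by
    cases i with
    | zero => exact hs
    | succ i => exact CondStep.abs hs

theorem rtg_app {i : ℕ} {t u p q : Tm Sig} (h₁ : ReflTransGen (CondRel Rules i) t u)
    (h₂ : ReflTransGen (CondRel Rules i) p q) :
    ReflTransGen (CondRel Rules i) (Tm.app t p) (Tm.app u q) := by
  cases i with
  | zero =>
    refine (h₁.lift (fun x => Tm.app x p) fun _ _ hs => ?_).trans
      (h₂.lift (fun x => Tm.app u x) fun _ _ hs => ?_)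
    · exact hs.elim
    · exact hs.elim
  | succ i =>
    exact (h₁.lift (fun x => Tm.app x p) fun _ _ hs => CondStep.appL hs).trans
      (h₂.lift (fun x => Tm.app u x) fun _ _ hs => CondStep.appR hs)

theorem rtg_substs {i : ℕ} (t : Tm Sig) : ∀ {σ τ : ℕ → Tm Sig},
    (∀ n, ReflTransGen (CondRel Rules i) (σ n) (τ n)) →
    ReflTransGen (CondRel Rules i) (t.subst σ) (t.subst τ) := by
  induction t with
  | var n => intro σ τ h; exact h n
  | sym f => intro σ τ h; exact .refl
  | app t u iht ihu => intro σ τ h; exact rtg_app (iht h) (ihu h)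
  | lam t ih =>
    intro σ τ h
    refine rtg_lam (ih fun n => ?_)
    cases n with
    | zero => exact .refl
    | succ n =>
      simp only [Tm.up, lift_zero, ren_eq_subst]
      exact rtg_subst (h n) _

theorem rtg_subst1 {i : ℕ} {t u p q : Tm Sig} (h₁ : ReflTransGen (CondRel Rules i) t u)
    (h₂ : ReflTransGen (CondRel Rules i) p q) :
    ReflTransGen (CondRel Rules i) (Tm.subst1 p t) (Tm.subst1 q u) := by
  refine (rtg_subst h₁ (scons p Tm.var)).trans (rtg_substs u fun n => ?_)
  cases n with
  | zero => exact h₂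
  | succ n => exact .refl

theorem CS.applicative (hralg : RightAlgebraic Rules) {t u : Tm Sig} (h : CS Rules prev t u) :
    Applicative t → Applicative u := by
  induction h with
  | @rule ρ hρ σ hc =>
    intro ht
    exact applicative_subst (algebraic_applicative (hralg ρ hρ)) fun n hn =>
      applicative_of_subst ρ.neut.applicative ht (ρ.fv_rhs n hn)
  | abs _ _ => intro ht; cases ht
  | appL _ ih => intro ht; cases ht with | app h₁ h₂ => exact .app (ih h₁) h₂
  | appR _ ih => intro ht; cases ht with | app h₁ h₂ => exact .app h₁ (ih h₂)

theorem rtg_applicative (hralg : RightAlgebraic Rules) {i : ℕ} {t u : Tm Sig}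
    (h : ReflTransGen (CondRel Rules i) t u) (ht : Applicative t) : Applicative u := by
  induction h with
  | refl => exact ht
  | tail _ hs ih =>
    cases i with
    | zero => exact hs.elim
    | succ i => exact (CondStep.toCS (CondRel.subst i) hs).applicative hralg ih

/-! ### Commutation of rewriting with parallel β-reduction -/

/-- Commutation of a parallel β-step with one rewrite step in stratum `i`. -/
def Peak (Rules : Set (CondRule Sig)) (i : ℕ) : Prop :=
  ∀ t u s : Tm Sig, CondRel Rules i t u → PB t s →
    ∃ v, ReflTransGen (CondRel Rules i) s v ∧ PB u v

theorem Peak.rtg {i : ℕ} (hp : Peak Rules i) {t u s : Tm Sig}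
    (h : ReflTransGen (CondRel Rules i) t u) (hs : PB t s) :
    ∃ v, ReflTransGen (CondRel Rules i) s v ∧ PB u v := by
  induction h with
  | refl => exact ⟨s, .refl, hs⟩
  | tail _ hstep ih =>
    obtain ⟨v, h₁, h₂⟩ := ih
    obtain ⟨w, h₃, h₄⟩ := hp _ _ _ hstep h₂
    exact ⟨w, h₁.trans h₃, h₄⟩

/-- Satisfaction of the conditions of a semi-closed rule is preserved by parallel β-reduction
of the substitution. -/
theorem joinable_of_pb (hsc : SemiClosed Rules) (hralg : RightAlgebraic Rules) {i : ℕ}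
    (hpk : Peak Rules i) {ρ : CondRule Sig} (hρ : ρ ∈ Rules) {σ τ : ℕ → Tm Sig}
    (hst : ∀ n, PB (σ n) (τ n))
    (hc : ∀ p ∈ ρ.conds, Joinable (CondRel Rules i) (Tm.subst σ p.1) (Tm.subst σ p.2)) :
    ∀ p ∈ ρ.conds, Joinable (CondRel Rules i) (Tm.subst τ p.1) (Tm.subst τ p.2) := by
  intro p hp
  obtain ⟨happ, hcl⟩ := hsc ρ hρ p hp
  obtain ⟨w, h₁, h₂⟩ := hc p hp
  obtain ⟨w', h₃, h₄⟩ := hpk.rtg h₁ ((PB.refl p.1).substs hst)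
  -- the common reduct `w` is a reduct of the closed applicative term `p.2`, hence β-normal
  have hw : Applicative w :=
    rtg_applicative hralg h₂ (applicative_subst happ fun n hn => (hcl n hn).elim)
  rw [applicative_pb hw h₄] at h₃
  rw [subst_closed hcl σ τ] at h₂
  exact ⟨w, h₃, h₂⟩

theorem peak (hsc : SemiClosed Rules) (hll : LeftLinear Rules) (hralg : RightAlgebraic Rules)
    (i : ℕ) : Peak Rules i := by
  induction i with
  | zero => intro t u s h; exact h.elim
  | succ i hpk =>
    intro t u s h
    have h' := CondStep.toCS (CondRel.subst i) h
    clear h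
    induction h' generalizing s with
    | @rule ρ hρ σ hc =>
      intro hs
      obtain ⟨τ, hst, rfl⟩ := ρ.neut.pb_inv σ (hll ρ hρ) s hs
      exact ⟨_, .single (CondStep.rule hρ τ (joinable_of_pb hsc hralg hpk hρ hst hc)),
        (PB.refl _).substs hst⟩
    | abs _ ih =>
      intro hs
      obtain ⟨s', rfl, hs'⟩ := hs.lam_inv
      obtain ⟨v, h₁, h₂⟩ := ih _ hs'
      exact ⟨_, rtg_lam h₁, .abs h₂⟩
    | appL hstep ih =>
      intro hs
      cases hs with
      | app p₁ p₂ =>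
        obtain ⟨v, h₁, h₂⟩ := ih _ p₁
        exact ⟨_, rtg_app h₁ .refl, .app h₂ p₂⟩
      | beta p₁ p₂ =>
        obtain ⟨u', rfl, _⟩ := hstep.lam_inv
        obtain ⟨v, h₁, h₂⟩ := ih _ (.abs p₁)
        obtain ⟨v', rfl, h₃⟩ := h₂.lam_inv
        obtain ⟨v'', e, h₄⟩ := rtg_lam_inv h₁
        cases e
        exact ⟨_, rtg_subst1 h₄ .refl, .beta h₃ p₂⟩
    | appR _ ih =>
      intro hs
      cases hs with
      | app p₁ p₂ =>
        obtain ⟨v, h₁, h₂⟩ := ih _ p₂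
        exact ⟨_, rtg_app .refl h₁, .app p₁ h₂⟩
      | beta p₁ p₂ =>
        obtain ⟨v, h₁, h₂⟩ := ih _ p₂
        exact ⟨_, rtg_subst1 .refl h₁, .beta p₁ h₂⟩

/-! ### Arities and complete developments of rewrite steps -/

theorem Tm.Subterm.trans {s t u : Tm Sig} (h₁ : Subterm s t) (h₂ : Subterm t u) :
    Subterm s u := by
  induction h₂ with
  | refl => exact h₁
  | appL _ ih => exact .appL ih
  | appR _ ih => exact .appR ih
  | lam _ ih => exact .lam ih

theorem RespectsArity.subterm {a : Sig → ℕ} {s t : Tm Sig} (h : RespectsArity a t)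
    (hs : Subterm s t) : RespectsArity a s :=
  fun f ts hf => h f ts (hf.trans hs)

/-- In a term respecting the arity, a rewrite step at the left of an application creates
no abstraction: a step producing one would be at the root, on a symbol which already has
all the arguments its arity allows. -/
theorem CS.ne_lam {a : Sig → ℕ} (harr : SysRespectsArity a Rules) {t u v : Tm Sig}
    (h : CS Rules prev t u) (hta : RespectsArity a (Tm.app t v)) (ht : ∀ p, t ≠ Tm.lam p) :
    ∀ p, u ≠ Tm.lam p := by
  cases h with
  | @rule ρ hρ σ hc =>
    obtain ⟨f, ls, e, hlen⟩ := (harr ρ hρ).2.2.2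
    have h := hta f (ls.map (Tm.subst σ) ++ [v]) (by
      rw [appList_concat, e, subst_appList]
      exact .refl _)
    simp at h
    omega
  | abs h => exact (ht _ rfl).elim
  | appL h => intro p hp; cases hp
  | appR h => intro p hp; cases hp

/-- A rewrite step from a term respecting the arity is mapped by complete development to a
sequence of rewrite steps. -/
theorem condRel_dev {a : Sig → ℕ} (hsc : SemiClosed Rules) (hll : LeftLinear Rules)
    (hralg : RightAlgebraic Rules) (harr : SysRespectsArity a Rules) (i : ℕ) {t u : Tm Sig}
    (h : CondRel Rules i t u) (hta : RespectsArity a t) :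
    ReflTransGen (CondRel Rules i) (dev t) (dev u) := by
  cases i with
  | zero => exact h.elim
  | succ i =>
    have h' := CondStep.toCS (CondRel.subst i) h
    clear h
    induction h' with
    | @rule ρ hρ σ hc =>
      rw [ρ.neut.dev_subst, algebraic_dev_subst (hralg ρ hρ)]
      exact .single (CondStep.rule hρ _ (joinable_of_pb hsc hralg (peak hsc hll hralg i) hρ
        (fun n => PB.dev_max (PB.refl (σ n))) hc))
    | abs _ ih => exact rtg_lam (ih (hta.subterm (.lam (.refl _))))
    | @appL t u v hstep ih =>
      have ih := ih (hta.subterm (.appL (.refl _)))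
      by_cases hl : ∃ p, t = Tm.lam p
      · obtain ⟨p, rfl⟩ := hl
        obtain ⟨q, rfl, _⟩ := hstep.lam_inv
        obtain ⟨q', e, h⟩ := rtg_lam_inv ih
        cases e
        exact rtg_subst1 h .refl
      · have hne : ∀ p, t ≠ Tm.lam p := by simpa using hl
        rw [dev_app_of_ne_lam hne, dev_app_of_ne_lam (hstep.ne_lam harr hta hne)]
        exact rtg_app ih .refl
    | @appR t u v _ ih =>
      have ih := ih (hta.subterm (.appR (.refl _)))
      by_cases hl : ∃ p, v = Tm.lam p
      · obtain ⟨p, rfl⟩ := hl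
        exact rtg_subst1 .refl ih
      · have hne : ∀ p, v ≠ Tm.lam p := by simpa using hl
        rw [dev_app_of_ne_lam hne, dev_app_of_ne_lam hne]
        exact rtg_app .refl ih

end

/-- For a semi-closed, left-linear, right-algebraic system `R`
respecting the arity `a` and a conditionally `(R,a)`-stable set `S`: for every `i`
and `t, u, v ∈ S`, if `t →_{R_i} u ▷β v` then `t ▷β t' →*_{R_i} v' ◁β v`. -/
theorem cond_step_pbeta_local {Sig : Type} (a : Sig → ℕ) (Rules : Set (CondRule Sig))
    (hsc : SemiClosed Rules) (hll : LeftLinear Rules) (hralg : RightAlgebraic Rules)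
    (harr : SysRespectsArity a Rules)
    (S : Set (Tm Sig)) (hS : CondStable Rules a S)
    (i : ℕ) (t u v : Tm Sig) (ht : t ∈ S) (hu : u ∈ S) (hv : v ∈ S)
    (h₁ : CondRel Rules i t u) (h₂ : PBeta u v) :
    ∃ t' v', PBeta t t' ∧ Relation.ReflTransGen (CondRel Rules i) t' v' ∧
      PBeta v v' := by
  have h := condRel_dev hsc hll hralg harr i h₁ (hS.1 t ht)
  exact ⟨t.dev, u.dev, (PB.dev_max (PB.refl t)).toPBeta, h, (h₂.toPB.dev_max).toPBeta⟩
end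

section
/- Let R be an orthonormal conditional rewrite system and i,j ≥ 0. Assume that →_{β ∪ R(β)_n} commutes with →_{β ∪ R(β)_m} for all n,m with {n,m} <_mul {i,j} (multiset extension of < on ℕ). Then for every rule d⃗=c⃗ ⊃ l ↦ r of R and substitution σ: if lσ →_{R(β)_i} rσ by a rooted step and lσ →_{∥R(β)_j} u, then there exists v with rσ →_{∥R(β)_j} v and either u = v or u →_{R(β)_i} v. -/
/-!
The step out of `lσ` by `→_{∥R(β)_j}` is analysed through a presentation `Par` of this relation
in which the only basic steps are rule instances at the root and in which closure under
substitution is a theorem instead of a constructor (`par_iff`).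

Because `l` is linear and contains no abstraction, a parallel step out of `lσ` either contracts a
rule instance `l'τ` at a non-variable position of `l`, or takes place entirely inside `σ`, so
that it reaches some `lσ'` with `σ ▷ σ'` pointwise (`Par.decompose`).

* In the first case, either `l'` is `l` itself at the root, and then both steps have the same
  result; or the overlap is an instance of a critical pair, since unifiable linear terms have a
  most general unifier (`exists_mgu`, `exists_criticalPair`). Orthonormality then provides two
  conditions with the same left-hand side and distinct right-hand sides. The right-hand sides
  are normal forms, so joinability means that the common left-hand side reduces to both of them,
  and commutation at the preceding strata forces them to be equal: a contradiction.
* In the second case, `v = rσ'` works. For a condition `d = c` one has `dσ →* c` at stratum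
  `i - 1` and `dσ →* dσ'` at stratum `j`; commutation for `{i - 1, j}` and normality of `c` give
  `dσ' →* c`, so the rule still applies to `lσ'` and yields the required step.
-/

set_option autoImplicit false

namespace ParallelMoves

open Tm Relation

variable {Sig : Type}

/-! ### Substitution calculus -/

theorem subst_congr (t : Tm Sig) : ∀ {σ τ : ℕ → Tm Sig},
    (∀ n, FVar t n → σ n = τ n) → subst σ t = subst τ t := by
  induction t with
  | var n => intro σ τ h; exact h n rfl
  | app a b iha ihb =>
    intro σ τ h
    simp only [subst]
    rw [iha fun n hn => h n (Or.inl hn), ihb fun n hn => h n (Or.inr hn)]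
  | lam t ih =>
    intro σ τ h
    simp only [subst]
    rw [ih]
    rintro (_ | n) hn
    · rfl
    · simp only [up]; rw [h n hn]
  | sym f => intros; rfl

theorem eq_of_subst_eq (t : Tm Sig) (ht : Applicative t) {σ τ : ℕ → Tm Sig}
    (h : subst σ t = subst τ t) : ∀ n, FVar t n → σ n = τ n := by
  induction ht with
  | var m => rintro n rfl; exact h
  | sym f => intro n hn; exact hn.elim
  | app _ _ iha ihb =>
    simp only [subst, app.injEq] at h
    rintro n (hn | hn)
    · exact iha h.1 n hn
    · exact ihb h.2 n hn

theorem subst_var (t : Tm Sig) : subst var t = t := by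
  induction t with
  | var n => rfl
  | app a b iha ihb => simp only [subst, iha, ihb]
  | lam t ih =>
    have : up (var : ℕ → Tm Sig) = var := by
      funext n; cases n <;> simp [up, lift]
    simp only [subst, this, ih]
  | sym f => rfl

/-- The shift at cutoff `d` as a substitution. -/
def shift (d : ℕ) (n : ℕ) : Tm Sig := if n < d then var n else var (n + 1)

theorem up_shift (d : ℕ) : up (shift d : ℕ → Tm Sig) = shift (d + 1) := by
  funext n
  cases n with
  | zero => simp [up, shift]
  | succ n => by_cases h : n < d <;> simp [up, shift, lift, h]

theorem lift_eq_subst (t : Tm Sig) : ∀ d, lift d t = subst (shift d) t := by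
  induction t with
  | var n => intro d; rfl
  | app a b iha ihb => intro d; simp only [lift, subst, iha, ihb]
  | lam t ih => intro d; simp only [lift, subst, ih, up_shift]
  | sym f => intro d; rfl

theorem lift_lift (t : Tm Sig) : ∀ {k d : ℕ}, k ≤ d →
    lift (d + 1) (lift k t) = lift k (lift d t) := by
  induction t with
  | var n =>
    intro k d h
    simp only [lift]
    split_ifs <;> simp only [lift] <;> split_ifs <;> first | rfl | omega
  | app a b iha ihb => intro k d h; simp only [lift, iha h, ihb h]
  | lam t ih => intro k d h; simp only [lift]; rw [ih (by omega)]
  | sym f => intros; rfl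

theorem subst_lift (t : Tm Sig) : ∀ (d : ℕ) (σ : ℕ → Tm Sig),
    subst σ (lift d t) = subst (fun n => if n < d then σ n else σ (n + 1)) t := by
  induction t with
  | var n => intro d σ; simp only [lift]; split_ifs <;> simp [subst, *]
  | app a b iha ihb => intro d σ; simp only [lift, subst, iha, ihb]
  | lam t ih =>
    intro d σ
    simp only [lift, subst, ih]
    congr 2
    funext n
    cases n with
    | zero => simp [up]
    | succ n => by_cases h : n < d <;> simp [up, h]
  | sym f => intros; rfl

theorem lift_subst (t : Tm Sig) : ∀ (d : ℕ) (σ : ℕ → Tm Sig),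
    lift d (subst σ t) = subst (fun n => lift d (σ n)) t := by
  induction t with
  | var n => intros; rfl
  | app a b iha ihb => intro d σ; simp only [lift, subst, iha, ihb]
  | lam t ih =>
    intro d σ
    simp only [lift, subst, ih]
    congr 2
    funext n
    cases n with
    | zero => simp [up, lift]
    | succ n => simp only [up]; exact lift_lift _ (Nat.zero_le _)
  | sym f => intros; rfl

theorem subst_subst (t : Tm Sig) : ∀ (σ τ : ℕ → Tm Sig),
    subst τ (subst σ t) = subst (fun n => subst τ (σ n)) t := by
  induction t with
  | var n => intros; rfl
  | app a b iha ihb => intro σ τ; simp only [subst, iha, ihb]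
  | lam t ih =>
    intro σ τ
    simp only [subst, ih]
    congr 2
    funext n
    cases n with
    | zero => rfl
    | succ n =>
      simp only [up]
      rw [subst_lift, lift_subst]
      rfl
  | sym f => intros; rfl

theorem subst_closed {t : Tm Sig} (h : ClosedTm t) (σ : ℕ → Tm Sig) : subst σ t = t := by
  conv_rhs => rw [← subst_var t]
  exact subst_congr t fun n hn => (h n hn).elim

/-! ### Linear applicative terms and their most general unifiers -/

/-- Linear terms without abstraction, with linearity expressed structurally: the two sides of an
application share no variable. -/
inductive ALin : Tm Sig → Prop
  | var (n : ℕ) : ALin (var n)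
  | sym (f : Sig) : ALin (sym f)
  | app {a b : Tm Sig} : ALin a → ALin b → (∀ n, FVar a n → ¬ FVar b n) → ALin (app a b)

theorem Applicative.appList {h : Tm Sig} (ts : List (Tm Sig)) (hh : Applicative h)
    (hts : ∀ t ∈ ts, Applicative t) : Applicative (Tm.appList h ts) := by
  induction ts generalizing h with
  | nil => exact hh
  | cons t ts ih =>
    exact ih (.app hh (hts t (by simp))) fun t' ht' => hts t' (by simp [ht'])

theorem Algebraic.applicative {t : Tm Sig} (h : Algebraic t) : Applicative t := by
  induction h with
  | var n => exact .var n
  | symApp f ts _ ih => exact Applicative.appList ts (.sym f) ih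

theorem one_le_countVar (t : Tm Sig) : ∀ n, FVar t n → 1 ≤ countVar t n := by
  induction t with
  | var m => rintro n rfl; simp [countVar]
  | app a b iha ihb =>
    rintro n (h | h)
    · have := iha n h; simp only [countVar]; omega
    · have := ihb n h; simp only [countVar]; omega
  | lam t ih => intro n h; exact ih _ h
  | sym f => intro n h; exact h.elim

theorem Applicative.aLin {t : Tm Sig} (h : Applicative t) (hl : LinearTm t) : ALin t := by
  induction h with
  | var n => exact .var n
  | sym f => exact .sym f
  | @app a b _ _ iha ihb =>
    simp only [LinearTm, countVar] at hl
    refine .app (iha fun n => ?_) (ihb fun n => ?_) fun n ha hb => ?_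
    · have := hl n; omega
    · have := hl n; omega
    · have := hl n
      have := one_le_countVar a n ha
      have := one_le_countVar b n hb
      omega

theorem fvar_rename {t : Tm Sig} (h : ALin t) (f : ℕ → ℕ) {n : ℕ}
    (hn : FVar (subst (fun k => var (f k)) t) n) : ∃ m, f m = n ∧ FVar t m := by
  induction h with
  | var m => exact ⟨m, hn, rfl⟩
  | sym g => exact hn.elim
  | app _ _ _ iha ihb =>
    rcases hn with hn | hn
    · obtain ⟨m, h1, h2⟩ := iha hn; exact ⟨m, h1, .inl h2⟩
    · obtain ⟨m, h1, h2⟩ := ihb hn; exact ⟨m, h1, .inr h2⟩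

theorem ALin.rename {t : Tm Sig} (h : ALin t) {f : ℕ → ℕ} (hf : Function.Injective f) :
    ALin (subst (fun k => Tm.var (f k)) t) := by
  induction h with
  | var m => exact .var _
  | sym g => exact .sym _
  | app ha hb hd iha ihb =>
    refine .app iha ihb fun n h1 h2 => ?_
    obtain ⟨m, rfl, hm⟩ := fvar_rename ha f h1
    obtain ⟨m', e, hm'⟩ := fvar_rename hb f h2
    obtain rfl := hf e
    exact hd _ hm hm'

theorem ALin.subtermAt {t : Tm Sig} (h : ALin t) : ∀ {p : List Bool} {w : Tm Sig},
    subtermAt t p = some w → ALin w := by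
  induction h with
  | var n =>
    intro p w hw
    cases p <;> simp [_root_.subtermAt] at hw
    exact hw ▸ .var n
  | sym f =>
    intro p w hw
    cases p <;> simp [_root_.subtermAt] at hw
    exact hw ▸ .sym f
  | app ha hb hd iha ihb =>
    intro p w hw
    rcases p with _ | ⟨_ | _, p⟩ <;> simp only [_root_.subtermAt, Option.some.injEq] at hw
    · exact hw ▸ .app ha hb hd
    · exact iha hw
    · exact ihb hw

/-- Binding a variable to a term in which it does not occur is a most general unifier. -/
theorem mgu_bind (x : ℕ) (t : Tm Sig) (hx : ¬ FVar t x) :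
    ∃ μ : ℕ → Tm Sig, μ x = subst μ t ∧
      ∀ θ : ℕ → Tm Sig, θ x = subst θ t → ∀ n, θ n = subst θ (μ n) := by
  classical
  refine ⟨Function.update var x t, ?_, ?_⟩
  · rw [Function.update_self]
    conv_lhs => rw [← subst_var t]
    refine subst_congr t fun n hn => ?_
    rw [Function.update_of_ne]
    rintro rfl
    exact hx hn
  · intro θ hθ n
    by_cases h : n = x
    · subst h; rw [Function.update_self]; exact hθ
    · rw [Function.update_of_ne h]; rfl

/-- Unifiable linear terms without common variables have a most general unifier. Linearity makes
the unification problems for the two sides of an application independent. -/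
theorem exists_mgu {s : Tm Sig} (hs : ALin s) : ∀ {t : Tm Sig}, ALin t →
    (∀ n, FVar s n → ¬ FVar t n) → (∃ θ : ℕ → Tm Sig, subst θ s = subst θ t) →
    ∃ μ : ℕ → Tm Sig, subst μ s = subst μ t ∧
      ∀ θ : ℕ → Tm Sig, subst θ s = subst θ t → ∀ n, θ n = subst θ (μ n) := by
  classical
  induction hs with
  | var x => intro t _ hd _; exact mgu_bind x t (hd x rfl)
  | sym f =>
    intro t ht hd hθ
    cases ht with
    | var y =>
      obtain ⟨μ, h1, h2⟩ := mgu_bind y (sym f) (by simp [FVar])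
      exact ⟨μ, h1.symm, fun θ h => h2 θ h.symm⟩
    | sym g =>
      obtain ⟨θ, h⟩ := hθ
      simp only [subst, Tm.sym.injEq] at h
      subst h
      exact ⟨var, rfl, fun _ _ _ => rfl⟩
    | app _ _ _ => obtain ⟨θ, h⟩ := hθ; simp [subst] at h
  | @app s₁ s₂ hs₁ hs₂ hds ih₁ ih₂ =>
    intro t ht hd hθ
    cases ht with
    | var y =>
      obtain ⟨μ, h1, h2⟩ := mgu_bind y (app s₁ s₂) (fun h => hd y h rfl)
      exact ⟨μ, h1.symm, fun θ h => h2 θ h.symm⟩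
    | sym g => obtain ⟨θ, h⟩ := hθ; simp [subst] at h
    | @app t₁ t₂ ht₁ ht₂ hdt =>
      simp only [subst, app.injEq] at hθ ⊢
      obtain ⟨θ, hθ₁, hθ₂⟩ := hθ
      obtain ⟨μ₁, e₁, g₁⟩ := ih₁ ht₁ (fun n h h' => hd n (.inl h) (.inl h')) ⟨θ, hθ₁⟩
      obtain ⟨μ₂, e₂, g₂⟩ := ih₂ ht₂ (fun n h h' => hd n (.inr h) (.inr h')) ⟨θ, hθ₂⟩
      let μ : ℕ → Tm Sig := fun n => if FVar s₁ n ∨ FVar t₁ n then μ₁ n else μ₂ n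
      have a1 : subst μ s₁ = subst μ₁ s₁ :=
        subst_congr _ fun n hn => if_pos (.inl hn)
      have a2 : subst μ t₁ = subst μ₁ t₁ :=
        subst_congr _ fun n hn => if_pos (.inr hn)
      have a3 : subst μ s₂ = subst μ₂ s₂ :=
        subst_congr _ fun n hn => if_neg <| by
          rintro (h | h)
          · exact hds n h hn
          · exact hd n (.inr hn) (.inl h)
      have a4 : subst μ t₂ = subst μ₂ t₂ :=
        subst_congr _ fun n hn => if_neg <| by
          rintro (h | h)
          · exact hd n (.inl h) (.inr hn)
          · exact hdt n h hn
      refine ⟨μ, ⟨by rw [a1, a2, e₁], by rw [a3, a4, e₂]⟩, fun θ h n => ?_⟩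
      by_cases hn : FVar s₁ n ∨ FVar t₁ n
      · simp only [μ, if_pos hn]; exact g₁ θ h.1 n
      · simp only [μ, if_neg hn]; exact g₂ θ h.2 n

/-! ### Overlaps are instances of critical pairs -/

theorem exists_replaceAt (σ : ℕ → Tm Sig) (s : Tm Sig) : ∀ (t : Tm Sig) (p : List Bool)
    {w : Tm Sig}, subtermAt t p = some w → ∃ r, replaceAt (subst σ t) p s = some r
  | _, [], _, _ => ⟨s, by simp [replaceAt]⟩
  | app a b, false :: p, w, h => by
    obtain ⟨r, hr⟩ := exists_replaceAt σ s a p (w := w) (by simpa [subtermAt] using h)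
    exact ⟨app r (subst σ b), by simp [subst, replaceAt, hr]⟩
  | app a b, true :: p, w, h => by
    obtain ⟨r, hr⟩ := exists_replaceAt σ s b p (w := w) (by simpa [subtermAt] using h)
    exact ⟨app (subst σ a) r, by simp [subst, replaceAt, hr]⟩
  | var _, _ :: _, _, h => by simp [subtermAt] at h
  | lam _, _ :: _, _, h => by simp [subtermAt] at h
  | sym _, _ :: _, _, h => by simp [subtermAt] at h

theorem lhs_applicative (ρ : CondRule Sig) : Applicative ρ.lhs :=
  Algebraic.applicative ρ.lhs_alg

theorem lhs_aLin {Rules : Set (CondRule Sig)} (h : LeftLinear Rules) {ρ : CondRule Sig}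
    (hρ : ρ ∈ Rules) : ALin ρ.lhs :=
  Applicative.aLin (lhs_applicative ρ) (h ρ hρ)

/-- In a left-linear system, every non-trivial overlap of rule instances is an instance, by some
`δ`, of a critical pair. -/
theorem exists_criticalPair {Rules : Set (CondRule Sig)} (hlin : LeftLinear Rules)
    {ρ₁ ρ₂ : CondRule Sig} (h₁ : ρ₁ ∈ Rules) (h₂ : ρ₂ ∈ Rules) {p : List Bool} {w : Tm Sig}
    (hw : subtermAt ρ₁.lhs p = some w) (hnv : ∀ n, w ≠ var n) (hne : ¬ (ρ₁ = ρ₂ ∧ p = []))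
    {τ₁ τ₂ : ℕ → Tm Sig} (hu : subst τ₁ w = subst τ₂ ρ₂.lhs) :
    ∃ (σ₁ σ₂ δ : ℕ → Tm Sig) (s t : Tm Sig),
      CriticalPair Rules (ρ₁.conds.map (fun q => (subst σ₁ q.1, subst σ₁ q.2)) ++
            ρ₂.conds.map (fun q => (subst σ₂ q.1, subst σ₂ q.2))) s t ∧
      (∀ n, τ₁ n = subst δ (σ₁ n)) ∧ (∀ n, τ₂ n = subst δ (σ₂ n)) := by
  have lw : ALin w := (lhs_aLin hlin h₁).subtermAt hw
  have l₂ : ALin ρ₂.lhs := lhs_aLin hlin h₂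
  have i₁ : Function.Injective (fun n : ℕ => 2 * n) := fun a b h => by
    simp only at h; omega
  have i₂ : Function.Injective (fun n : ℕ => 2 * n + 1) := fun a b h => by
    simp only at h; omega
  -- The variables of `w` are renamed to even indices, those of the second rule to odd ones.
  let join : (ℕ → Tm Sig) → (ℕ → Tm Sig) → ℕ → Tm Sig := fun θ₁ θ₂ n =>
    if n % 2 = 0 then θ₁ (n / 2) else θ₂ (n / 2)
  have j1 : ∀ θ₁ θ₂ n, join θ₁ θ₂ (2 * n) = θ₁ n := fun θ₁ θ₂ n => by
    simp [join]
  have j2 : ∀ θ₁ θ₂ n, join θ₁ θ₂ (2 * n + 1) = θ₂ n := fun θ₁ θ₂ n => by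
    have e1 : (2 * n + 1) % 2 = 1 := by omega
    have e2 : (2 * n + 1) / 2 = n := by omega
    simp [join, e1, e2]
  have key : ∀ θ₁ θ₂ : ℕ → Tm Sig, subst θ₁ w = subst θ₂ ρ₂.lhs →
      subst (join θ₁ θ₂) (subst (fun k => var (2 * k)) w)
        = subst (join θ₁ θ₂) (subst (fun k => var (2 * k + 1)) ρ₂.lhs) := by
    intro θ₁ θ₂ h
    rw [subst_subst, subst_subst]
    simpa only [subst, j1, j2] using h
  obtain ⟨μ, e, g⟩ := exists_mgu (lw.rename i₁) (l₂.rename i₂) (by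
    intro n ha hb
    obtain ⟨a, ha, -⟩ := fvar_rename lw _ ha
    obtain ⟨b, hb, -⟩ := fvar_rename l₂ _ hb
    omega) ⟨_, key τ₁ τ₂ hu⟩
  rw [subst_subst, subst_subst] at e
  simp only [subst] at e
  have fac : ∀ θ₁ θ₂ : ℕ → Tm Sig, subst θ₁ w = subst θ₂ ρ₂.lhs →
      (∀ n, θ₁ n = subst (join θ₁ θ₂) (μ (2 * n))) ∧
      (∀ n, θ₂ n = subst (join θ₁ θ₂) (μ (2 * n + 1))) := by
    intro θ₁ θ₂ h
    have := g _ (key θ₁ θ₂ h)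
    exact ⟨fun n => by rw [← this, j1], fun n => by rw [← this, j2]⟩
  obtain ⟨r, hr⟩ := exists_replaceAt (fun n => μ (2 * n))
    (subst (fun n => μ (2 * n + 1)) ρ₂.rhs) ρ₁.lhs p hw
  refine ⟨fun n => μ (2 * n), fun n => μ (2 * n + 1), join τ₁ τ₂, r, _,
    ⟨ρ₁, h₁, ρ₂, h₂, p, w, _, _, hw, hnv, hne, e, fun θ₁ θ₂ h => ?_, rfl, hr, rfl⟩,
    (fac τ₁ τ₂ hu).1, (fac τ₁ τ₂ hu).2⟩
  exact ⟨join θ₁ θ₂, fun n _ => (fac θ₁ θ₂ h).1 n, fun n _ => (fac θ₁ θ₂ h).2 n⟩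

/-! ### Strata of conditional rewriting -/

/-- `→_{β ∪ R(β)_i}`. -/
abbrev Stratum (Rules : Set (CondRule Sig)) (i : ℕ) (a b : Tm Sig) : Prop :=
  Beta a b ∨ BCondRel Rules i a b

theorem Stratum.abs {Rules : Set (CondRule Sig)} {i : ℕ} {t u : Tm Sig}
    (h : Stratum Rules i t u) : Stratum Rules i (lam t) (lam u) := by
  cases i with
  | zero => exact h.imp .abs id
  | succ i => exact h.imp .abs .abs

theorem Stratum.appL {Rules : Set (CondRule Sig)} {i : ℕ} {t u : Tm Sig} (v : Tm Sig)
    (h : Stratum Rules i t u) : Stratum Rules i (app t v) (app u v) := by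
  cases i with
  | zero => exact h.imp .appL id
  | succ i => exact h.imp .appL .appL

theorem Stratum.appR {Rules : Set (CondRule Sig)} {i : ℕ} {t u : Tm Sig} (v : Tm Sig)
    (h : Stratum Rules i t u) : Stratum Rules i (app v t) (app v u) := by
  cases i with
  | zero => exact h.imp .appR id
  | succ i => exact h.imp .appR .appR

theorem Stratum.subst {Rules : Set (CondRule Sig)} {i : ℕ} {t u : Tm Sig} (σ : ℕ → Tm Sig)
    (h : Stratum Rules i t u) : Stratum Rules i (Tm.subst σ t) (Tm.subst σ u) := by
  cases i with
  | zero => exact h.imp (.substC σ) id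
  | succ i => exact h.imp (.substC σ) (.substC σ)

theorem RootedBStep.mem {Rules : Set (CondRule Sig)} {j : ℕ} {ρ : CondRule Sig}
    {τ : ℕ → Tm Sig} (h : RootedBStep Rules j ρ τ) : ρ ∈ Rules := by
  cases j with
  | zero => exact h.elim
  | succ j => exact h.1

theorem RootedBStep.bCondRel {Rules : Set (CondRule Sig)} {j : ℕ} {ρ : CondRule Sig}
    {τ : ℕ → Tm Sig} (h : RootedBStep Rules j ρ τ) :
    BCondRel Rules j (subst τ ρ.lhs) (subst τ ρ.rhs) := by
  cases j with
  | zero => exact h.elim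
  | succ j => exact .rule h.1 τ h.2

theorem RootedBStep.subst {Rules : Set (CondRule Sig)} {j : ℕ} {ρ : CondRule Sig}
    {τ : ℕ → Tm Sig} (h : RootedBStep Rules j ρ τ) (σ : ℕ → Tm Sig) :
    RootedBStep Rules j ρ (fun n => Tm.subst σ (τ n)) := by
  cases j with
  | zero => exact h.elim
  | succ j =>
    refine ⟨h.1, fun p hp => ?_⟩
    obtain ⟨v, h1, h2⟩ := h.2 p hp
    refine ⟨Tm.subst σ v, ?_, ?_⟩
    · rw [← subst_subst]
      exact h1.lift (Tm.subst σ) fun _ _ h => Stratum.subst σ h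
    · rw [← subst_subst]
      exact h2.lift (Tm.subst σ) fun _ _ h => Stratum.subst σ h

/-! ### Normality of the right-hand sides of conditions -/

theorem subterm_head (f : Sig) : ∀ (ts : List (Tm Sig)) (h : Tm Sig), Subterm (sym f) h →
    Subterm (sym f) (appList h ts)
  | [], _, hh => hh
  | _ :: ts, _, hh => subterm_head f ts _ (.appL hh)

theorem subterm_sym_subst {f : Sig} {t : Tm Sig} (h : Subterm (sym f) t) :
    ∀ σ : ℕ → Tm Sig, Subterm (sym f) (subst σ t) := by
  induction h with
  | refl => intro σ; exact .refl _
  | appL _ ih => intro σ; exact .appL (ih σ)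
  | appR _ ih => intro σ; exact .appR (ih σ)
  | lam _ ih => intro σ; exact .lam (ih _)

theorem lhs_head (ρ : CondRule Sig) : ∃ f ts, ρ.lhs = appList (sym f) ts := by
  have h := ρ.lhs_alg
  have hv := ρ.lhs_not_var
  generalize ρ.lhs = l at h hv
  cases h with
  | var n => exact (hv n rfl).elim
  | symApp f ts _ => exact ⟨f, ts, rfl⟩

theorem exists_defined_subterm {Rules : Set (CondRule Sig)} {prev : Tm Sig → Tm Sig → Prop}
    {t u : Tm Sig} (h : CondStep Rules prev t u) :
    ∃ f, DefinedSym Rules f ∧ Subterm (sym f) t := by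
  induction h with
  | @rule ρ hρ σ _ =>
    obtain ⟨f, ts, e⟩ := lhs_head ρ
    refine ⟨f, ⟨ρ, hρ, ts, e⟩, subterm_sym_subst ?_ σ⟩
    rw [e]
    exact subterm_head f ts _ (.refl _)
  | abs _ ih => obtain ⟨f, h1, h2⟩ := ih; exact ⟨f, h1, .lam h2⟩
  | appL _ ih => obtain ⟨f, h1, h2⟩ := ih; exact ⟨f, h1, .appL h2⟩
  | appR _ ih => obtain ⟨f, h1, h2⟩ := ih; exact ⟨f, h1, .appR h2⟩
  | substC σ _ ih => obtain ⟨f, h1, h2⟩ := ih; exact ⟨f, h1, subterm_sym_subst h2 σ⟩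

theorem cond_rhs_normal {Rules : Set (CondRule Sig)} (horth : OrthonormalSys Rules)
    {ρ : CondRule Sig} (hρ : ρ ∈ Rules) {p : Tm Sig × Tm Sig} (hp : p ∈ ρ.conds) {i : ℕ}
    {v : Tm Sig} (h : ReflTransGen (Stratum Rules i) p.2 v) : v = p.2 := by
  obtain ⟨-, hn, hd⟩ := horth.2.1 ρ hρ p hp
  rcases h.cases_head with h | ⟨w, h, -⟩
  · exact h.symm
  · exfalso
    rcases h with h | h
    · exact hn _ h
    · cases i with
      | zero => exact h
      | succ i =>
        obtain ⟨f, h1, h2⟩ := exists_defined_subterm h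
        exact hd f h1 h2

theorem RootedBStep.reduces {Rules : Set (CondRule Sig)} (horth : OrthonormalSys Rules) {i : ℕ}
    {ρ : CondRule Sig} {σ : ℕ → Tm Sig} (h : RootedBStep Rules (i + 1) ρ σ)
    {p : Tm Sig × Tm Sig} (hp : p ∈ ρ.conds) :
    ReflTransGen (Stratum Rules i) (Tm.subst σ p.1) p.2 := by
  obtain ⟨v, h1, h2⟩ := h.2 p hp
  rw [subst_closed (horth.2.1 ρ h.1 p hp).1] at h2
  rwa [cond_rhs_normal horth h.1 hp h2] at h1

/-! ### Parallel rewriting -/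

/-- The parallel closure of `→_{R(β)_j}`, presented with root steps as the only basic steps and
without a constructor for closure under substitution. -/
inductive Par (Rules : Set (CondRule Sig)) (j : ℕ) : Tm Sig → Tm Sig → Prop
  | root {ρ : CondRule Sig} {τ : ℕ → Tm Sig} {s : Tm Sig} (h : RootedBStep Rules j ρ τ)
      (e : s = subst τ ρ.lhs) : Par Rules j s (subst τ ρ.rhs)
  | var (n : ℕ) : Par Rules j (var n) (var n)
  | sym (f : Sig) : Par Rules j (sym f) (sym f)
  | app {t₁ u₁ t₂ u₂ : Tm Sig} : Par Rules j t₁ u₁ → Par Rules j t₂ u₂ →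
      Par Rules j (app t₁ t₂) (app u₁ u₂)
  | abs {t u : Tm Sig} : Par Rules j t u → Par Rules j (lam t) (lam u)

theorem Par.refl {Rules : Set (CondRule Sig)} {j : ℕ} (t : Tm Sig) : Par Rules j t t := by
  induction t with
  | var n => exact .var n
  | app _ _ iha ihb => exact .app iha ihb
  | lam _ ih => exact .abs ih
  | sym f => exact .sym f

theorem Par.subst {Rules : Set (CondRule Sig)} {j : ℕ} {t u : Tm Sig} (h : Par Rules j t u) :
    ∀ σ : ℕ → Tm Sig, Par Rules j (Tm.subst σ t) (Tm.subst σ u) := by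
  induction h with
  | root h e =>
    intro σ
    subst e
    rw [subst_subst, subst_subst]
    exact .root (RootedBStep.subst h σ) rfl
  | var n => intro σ; exact Par.refl _
  | sym f => intro σ; exact .sym f
  | app _ _ iha ihb => intro σ; exact .app (iha σ) (ihb σ)
  | abs _ ih => intro σ; exact .abs (ih _)

theorem Par.subst_par {Rules : Set (CondRule Sig)} {j : ℕ} (t : Tm Sig) :
    ∀ {σ τ : ℕ → Tm Sig}, (∀ n, Par Rules j (σ n) (τ n)) →
      Par Rules j (Tm.subst σ t) (Tm.subst τ t) := by
  induction t with
  | var n => intro σ τ h; exact h n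
  | app _ _ iha ihb => intro σ τ h; exact .app (iha h) (ihb h)
  | lam _ ih =>
    intro σ τ h
    refine .abs (ih ?_)
    rintro (_ | n)
    · exact .var 0
    · simp only [up, lift_eq_subst]
      exact (h n).subst _
  | sym f => intro σ τ h; exact .sym f

theorem Par.of_condStep {Rules : Set (CondRule Sig)} {j : ℕ} {t u : Tm Sig}
    (h : BCondRel Rules j t u) : Par Rules j t u := by
  cases j with
  | zero => exact h.elim
  | succ j =>
    simp only [BCondRel] at h
    induction h with
    | rule hρ σ hc => exact .root (j := j + 1) ⟨hρ, hc⟩ rfl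
    | abs _ ih => exact .abs ih
    | appL _ ih => exact .app ih (.refl _)
    | appR _ ih => exact .app (.refl _) ih
    | substC σ _ ih => exact ih.subst σ

theorem par_iff {Rules : Set (CondRule Sig)} {j : ℕ} {t u : Tm Sig} :
    Par Rules j t u ↔ ParCl (BCondRel Rules j) t u := by
  constructor
  · intro h
    induction h with
    | root h e => subst e; exact .base (RootedBStep.bCondRel h)
    | var n => exact .var n
    | sym f => exact .sym f
    | app _ _ iha ihb => exact .app iha ihb
    | abs _ ih => exact .abs ih
  · intro h
    induction h with
    | base h => exact .of_condStep h
    | var n => exact .var n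
    | sym f => exact .sym f
    | app _ _ iha ihb => exact .app iha ihb
    | abs _ ih => exact .abs ih
    | substC σ _ ih => exact ih.subst σ

theorem Par.reflTransGen {Rules : Set (CondRule Sig)} {j : ℕ} {t u : Tm Sig}
    (h : Par Rules j t u) : ReflTransGen (Stratum Rules j) t u := by
  induction h with
  | root h e => subst e; exact .single (.inr (RootedBStep.bCondRel h))
  | var n => exact .refl
  | sym f => exact .refl
  | @app t₁ u₁ t₂ u₂ _ _ iha ihb =>
    exact (iha.lift (fun x => Tm.app x t₂) fun _ _ h => Stratum.appL _ h).trans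
      (ihb.lift (fun x => Tm.app u₁ x) fun _ _ h => Stratum.appR _ h)
  | abs _ ih => exact ih.lift lam fun _ _ h => Stratum.abs h

/-- A parallel step out of an instance `wσ` of a linear term contracts a rule instance at a
non-variable position of `w`, unless it takes place inside `σ`. -/
theorem Par.decompose {Rules : Set (CondRule Sig)} {j : ℕ} {σ : ℕ → Tm Sig} {w : Tm Sig}
    (hw : ALin w) : ∀ {u : Tm Sig}, Par Rules j (Tm.subst σ w) u →
    (∃ (p : List Bool) (w' : Tm Sig) (ρ : CondRule Sig) (τ : ℕ → Tm Sig),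
      subtermAt w p = some w' ∧ (∀ n, w' ≠ Tm.var n) ∧ RootedBStep Rules j ρ τ ∧
      Tm.subst σ w' = Tm.subst τ ρ.lhs ∧ (p = [] → u = Tm.subst τ ρ.rhs)) ∨
    ∃ σ' : ℕ → Tm Sig, u = Tm.subst σ' w ∧ ∀ n, Par Rules j (σ n) (σ' n) := by
  classical
  induction hw with
  | var n =>
    intro u h
    refine .inr ⟨Function.update σ n u, by simp [Tm.subst], fun m => ?_⟩
    by_cases hm : m = n
    · subst hm; rw [Function.update_self]; exact h
    · rw [Function.update_of_ne hm]; exact .refl _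
  | sym f =>
    intro u h
    cases h with
    | root h e => exact .inl ⟨[], _, _, _, rfl, by simp, h, e, fun _ => rfl⟩
    | sym => exact .inr ⟨σ, rfl, fun _ => .refl _⟩
  | @app a b ha hb hd iha ihb =>
    intro u h
    cases h with
    | root h e => exact .inl ⟨[], _, _, _, rfl, by simp, h, e, fun _ => rfl⟩
    | app h₁ h₂ =>
      rcases iha h₁ with ⟨p, w', ρ, τ, k1, k2, k3, k4, -⟩ | ⟨σ₁, rfl, g₁⟩
      · exact .inl ⟨false :: p, w', ρ, τ, by simpa [subtermAt] using k1, k2, k3, k4, by simp⟩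
      rcases ihb h₂ with ⟨p, w', ρ, τ, k1, k2, k3, k4, -⟩ | ⟨σ₂, rfl, g₂⟩
      · exact .inl ⟨true :: p, w', ρ, τ, by simpa [subtermAt] using k1, k2, k3, k4, by simp⟩
      refine .inr ⟨fun n => if FVar a n then σ₁ n else σ₂ n, ?_, fun n => ?_⟩
      · simp only [Tm.subst]
        congr 1
        · exact subst_congr _ fun n hn => (if_pos hn).symm
        · exact subst_congr _ fun n hn => (if_neg fun h => hd n h hn).symm
      · dsimp only
        split_ifs
        · exact g₁ n
        · exact g₂ n

/-! ### Infeasibility of critical pairs -/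

theorem mulLt_pred_left (i j : ℕ) : MulLt {i, j} {i + 1, j} :=
  ⟨{i}, {i + 1}, {j}, by simp, by rw [Multiset.pair_comm]; rfl, by rw [Multiset.pair_comm]; rfl,
    by simp⟩

theorem mulLt_of_lt {n m i j : ℕ} (hn : n < i ∨ n < j) (hm : m < i ∨ m < j) :
    MulLt {n, m} {i, j} := by
  refine ⟨{n, m}, {i, j}, 0, by simp, by simp, by simp, ?_⟩
  intro x hx
  simp only [Multiset.insert_eq_cons, Multiset.mem_cons, Multiset.mem_singleton] at hx ⊢
  rcases hx with rfl | rfl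
  · rcases hn with h | h
    exacts [⟨i, .inl rfl, h⟩, ⟨j, .inr rfl, h⟩]
  · rcases hm with h | h
    exacts [⟨i, .inl rfl, h⟩, ⟨j, .inr rfl, h⟩]

/-- The conditions of a critical pair cannot be satisfied simultaneously at strata `i` and `j`,
so two feasible root steps overlap only trivially. -/
theorem no_overlap {Rules : Set (CondRule Sig)} (horth : OrthonormalSys Rules) {i j : ℕ}
    (hcomm : ∀ n m : ℕ, MulLt {n, m} {i, j} → Commutes (Stratum Rules n) (Stratum Rules m))
    {ρ₁ ρ₂ : CondRule Sig} {τ₁ τ₂ : ℕ → Tm Sig} (r₁ : RootedBStep Rules i ρ₁ τ₁)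
    (r₂ : RootedBStep Rules j ρ₂ τ₂) {p : List Bool} {w : Tm Sig}
    (hw : subtermAt ρ₁.lhs p = some w) (hnv : ∀ n, w ≠ var n)
    (hu : subst τ₁ w = subst τ₂ ρ₂.lhs) : ρ₁ = ρ₂ ∧ p = [] := by
  by_contra hne
  cases i with
  | zero => exact r₁.elim
  | succ i =>
  cases j with
  | zero => exact r₂.elim
  | succ j =>
  obtain ⟨σ₁, σ₂, δ, s, t, hcp, e₁, e₂⟩ :=
    exists_criticalPair horth.1 r₁.1 r₂.1 hw hnv hne hu
  -- Every condition of the critical pair, instantiated by `δ`, reduces to its right-hand side.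
  have key : ∀ q ∈ ρ₁.conds.map (fun q => (subst σ₁ q.1, subst σ₁ q.2)) ++
      ρ₂.conds.map (fun q => (subst σ₂ q.1, subst σ₂ q.2)),
      ∃ k, (k < i + 1 ∨ k < j + 1) ∧ ReflTransGen (Stratum Rules k) (subst δ q.1) q.2 ∧
        ∀ (m : ℕ) (v : Tm Sig), ReflTransGen (Stratum Rules m) q.2 v → v = q.2 := by
    intro q hq
    rcases List.mem_append.1 hq with hq | hq
    · obtain ⟨q', hq', rfl⟩ := List.mem_map.1 hq
      refine ⟨i, .inl (Nat.lt_succ_self i), ?_, ?_⟩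
      all_goals dsimp only; rw [subst_closed (horth.2.1 ρ₁ r₁.1 q' hq').1]
      · rw [subst_subst, ← funext e₁]
        exact RootedBStep.reduces horth r₁ hq'
      · intro m v hv
        exact cond_rhs_normal horth r₁.1 hq' hv
    · obtain ⟨q', hq', rfl⟩ := List.mem_map.1 hq
      refine ⟨j, .inr (Nat.lt_succ_self j), ?_, ?_⟩
      all_goals dsimp only; rw [subst_closed (horth.2.1 ρ₂ r₂.1 q' hq').1]
      · rw [subst_subst, ← funext e₂]
        exact RootedBStep.reduces horth r₂ hq'
      · intro m v hv
        exact cond_rhs_normal horth r₂.1 hq' hv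
  obtain ⟨a, b, -, hab, hne'⟩ := horth.2.2 _ s t hcp
  obtain ⟨k, hk, ka, na⟩ := key _ (List.get_mem _ a)
  obtain ⟨m, hm, mb, nb⟩ := key _ (List.get_mem _ b)
  rw [hab] at ka
  obtain ⟨v, h1, h2⟩ := hcomm k m (mulLt_of_lt hk hm) _ _ _ ka mb
  exact hne' ((na _ _ h1).symm.trans (nb _ _ h2))

end ParallelMoves

open ParallelMoves

/-- Parallel moves for orthonormal systems: assuming the commutation
of `→_{β ∪ R(β)_n}` and `→_{β ∪ R(β)_m}` for all `{n,m} <_mul {i,j}`, a rooted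
`R(β)_i`-step out of `lσ` and a parallel `R(β)_j`-step `lσ →_{∥R(β)_j} u` can be
joined: there is `v` with `rσ →_{∥R(β)_j} v` and `u →_{R(β)_i}^= v`. -/
theorem parallel_moves_rooted {Sig : Type} (Rules : Set (CondRule Sig))
    (horth : OrthonormalSys Rules) (i j : ℕ)
    (hcomm : ∀ n m : ℕ, MulLt {n, m} {i, j} →
      Commutes (fun a b : Tm Sig => Beta a b ∨ BCondRel Rules n a b)
               (fun a b : Tm Sig => Beta a b ∨ BCondRel Rules m a b))
    (ρ : CondRule Sig) (σ : ℕ → Tm Sig)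
    (hroot : RootedBStep Rules i ρ σ)
    (u : Tm Sig) (hu : ParCl (BCondRel Rules j) (Tm.subst σ ρ.lhs) u) :
    ∃ v, ParCl (BCondRel Rules j) (Tm.subst σ ρ.rhs) v ∧
      (u = v ∨ BCondRel Rules i u v) := by
  obtain ⟨hlin, -, -⟩ := id horth
  rw [← par_iff] at hu
  rcases Par.decompose (lhs_aLin hlin (RootedBStep.mem hroot)) hu with
    ⟨p, w, ρ', τ, hw, hnv, hτ, e, hp⟩ | ⟨σ', rfl, hσ⟩
  · obtain ⟨rfl, rfl⟩ := no_overlap horth hcomm hroot hτ hw hnv e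
    obtain rfl : ρ.lhs = w := by simpa [subtermAt] using hw
    refine ⟨u, ?_, .inl rfl⟩
    rw [hp rfl, subst_congr ρ.rhs fun n hn =>
      eq_of_subst_eq _ (lhs_applicative ρ) e n (ρ.fv_rhs n hn)]
    exact par_iff.1 (.refl _)
  · refine ⟨Tm.subst σ' ρ.rhs, par_iff.1 (Par.subst_par _ hσ), .inr ?_⟩
    cases i with
    | zero => exact hroot.elim
    | succ i =>
      refine RootedBStep.bCondRel (j := i + 1) ⟨hroot.1, fun q hq => ⟨q.2, ?_, ?_⟩⟩
      · obtain ⟨v, h1, h2⟩ := hcomm i j (mulLt_pred_left i j) _ _ _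
          (RootedBStep.reduces horth hroot hq) (Par.subst_par q.1 hσ).reflTransGen
        rwa [cond_rhs_normal horth hroot.1 hq h1] at h2
      · rw [subst_closed (horth.2.1 ρ hroot.1 q hq).1]
end

section
/- Let R be a conditional rewrite system and S ⊆ Te(Σ) a set of terms closed under →_{β ∪ R(β)}. Assume →_{β∪R} is confluent on S, and that for all s,t ∈ S, s →*_{β ∪ R(β)} t implies there exist s',t' with s →β* s' →*_R t' and t →β* t'. Then →_{β ∪ R(β)} is confluent on S. -/
/-!
Given a peak `u ←* t →* v` of `→_{β ∪ R(β)}` with `t ∈ S`, the terms `u` and `v` lie in `S` by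
closure, so both sides project: `t →β* s₁ →*_R u₁` with `u →β* u₁`, and `t →β* s₂ →*_R v₁` with
`v →β* v₁`. Hence `u₁` and `v₁` are `→*_{β ∪ R}`-reducts of `t`, and confluence of `→_{β ∪ R}` on
`S`, applied at `t` itself, gives them a common reduct `w`. Since `→_R ⊆ →_{R(β)}`
(`CondRew.bCondRew`), `u →β* u₁ →* w` and `v →β* v₁ →* w` are `→_{β ∪ R(β)}`-reductions, which
closes the peak.
-/

set_option autoImplicit false

/-! ### Inclusion of conditional in β-conditional rewriting -/

/-- A stratum of conditional rewriting grows with the relation that evaluates the conditions. -/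
theorem CondStep.mono {Sig : Type} {Rules : Set (CondRule Sig)}
    {P Q : Tm Sig → Tm Sig → Prop} (hPQ : ∀ a b, P a b → Q a b) {t u : Tm Sig}
    (h : CondStep Rules P t u) : CondStep Rules Q t u := by
  induction h with
  | rule hρ σ hc =>
    refine .rule hρ σ fun p hp => ?_
    obtain ⟨w, h₁, h₂⟩ := hc p hp
    exact ⟨w, Relation.ReflTransGen.mono hPQ _ _ h₁, Relation.ReflTransGen.mono hPQ _ _ h₂⟩
  | abs _ ih => exact .abs ih
  | appL _ ih => exact .appL ih
  | appR _ ih => exact .appR ih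
  | substC σ _ ih => exact .substC σ ih

theorem CondRel.bCondRel {Sig : Type} {Rules : Set (CondRule Sig)} (i : ℕ) :
    ∀ t u : Tm Sig, CondRel Rules i t u → BCondRel Rules i t u := by
  induction i with
  | zero => exact fun _ _ h => h
  | succ i ih => exact fun _ _ h => CondStep.mono (fun a b hab => Or.inr (ih a b hab)) h

theorem CondRew.bCondRew {Sig : Type} {Rules : Set (CondRule Sig)} {t u : Tm Sig}
    (h : CondRew Rules t u) : BCondRew Rules t u :=
  h.imp fun i hi => CondRel.bCondRel i t u hi

/-! ### Confluence of β-conditional rewriting -/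

/-- If `S` is closed under `→_{β ∪ R(β)}`, `→_{β∪R}` is confluent on
`S`, and every `→*_{β ∪ R(β)}` derivation between terms of `S` projects through
β-reduction onto a `→*_R` derivation, then `→_{β ∪ R(β)}` is confluent on `S`. -/
theorem confluence_from_projection {Sig : Type} (Rules : Set (CondRule Sig))
    (S : Set (Tm Sig))
    (hclosed : ∀ t ∈ S, ∀ u, (Beta t u ∨ BCondRew Rules t u) → u ∈ S)
    (hconf : ConfluentOn S (fun a b : Tm Sig => Beta a b ∨ CondRew Rules a b))
    (hproj : ∀ s ∈ S, ∀ t ∈ S,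
      Relation.ReflTransGen (fun a b : Tm Sig => Beta a b ∨ BCondRew Rules a b) s t →
      ∃ s' t', Relation.ReflTransGen Beta s s' ∧
        Relation.ReflTransGen (CondRew Rules) s' t' ∧
        Relation.ReflTransGen Beta t t') :
    ConfluentOn S (fun a b : Tm Sig => Beta a b ∨ BCondRew Rules a b) := by
  intro t ht u v hu hv
  have mem : ∀ x, Relation.ReflTransGen
      (fun a b : Tm Sig => Beta a b ∨ BCondRew Rules a b) t x → x ∈ S := by
    intro x hx
    induction hx with
    | refl => exact ht
    | tail _ hstep ih => exact hclosed _ ih _ hstep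
  obtain ⟨s₁, u₁, hts₁, hsu₁, huu₁⟩ := hproj t ht u (mem u hu) hu
  obtain ⟨s₂, v₁, hts₂, hsv₂, hvv₁⟩ := hproj t ht v (mem v hv) hv
  have peak : ∀ x y, Relation.ReflTransGen Beta t x →
      Relation.ReflTransGen (CondRew Rules) x y →
      Relation.ReflTransGen (fun a b : Tm Sig => Beta a b ∨ CondRew Rules a b) t y :=
    fun _ _ hx hy => .trans (Relation.ReflTransGen.mono (fun _ _ => Or.inl) _ _ hx)
      (Relation.ReflTransGen.mono (fun _ _ => Or.inr) _ _ hy)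
  have valley : ∀ x y z, Relation.ReflTransGen Beta x y →
      Relation.ReflTransGen (fun a b : Tm Sig => Beta a b ∨ CondRew Rules a b) y z →
      Relation.ReflTransGen (fun a b : Tm Sig => Beta a b ∨ BCondRew Rules a b) x z :=
    fun _ _ _ hy hz => .trans (Relation.ReflTransGen.mono (fun _ _ => Or.inl) _ _ hy)
      (Relation.ReflTransGen.mono (fun _ _ h => h.imp_right CondRew.bCondRew) _ _ hz)
  obtain ⟨w, huw, hvw⟩ := hconf t ht u₁ v₁ (peak s₁ u₁ hts₁ hsu₁) (peak s₂ v₁ hts₂ hsv₂)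
  exact ⟨w, valley u u₁ w huu₁ huw, valley v v₁ w hvv₁ hvw⟩
end
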